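/- Assume in addition conditions (C1) and (C2): there is α ∈ F⊗F with α·(σ(α)+S) = R, and α and each Δ^{ij} are central in F⊗F; write ᾱ := σ(α)+S. Let V_n be the free right B-module with basis v₁,…,v_n and V_n^{⊗d} its d-fold tensor power over 𝕜, a right B^{⊗d}-module by factorwise multiplication, so V_n^{⊗d} = ⊕_{i∈{1,…,n}^d} v_i·B^{⊗d} with v_i := v_{i₁}⊗⋯⊗v_{i_d}. Define 𝕜-linear operators H_k (1 ≤ k ≤ d−1) on V_n^{⊗d} by, for b ∈ B^{⊗d}: (v_i·b)·H_k := v_{i·s_k}·σ_k(b) + v_i·ρ_k(b) if i_k < i_{k+1}; := v_i·ᾱ_k·σ_k(b) + v_i·ρ_k(b) if i_k = i_{k+1}; := v_{i·s_k}·R_k·σ_k(b) + v_i·(ρ_k(b) + S_k·σ_k(b)) if i_k > i_{k+1}; where i·s_k swaps entries k and k+1 of i, and ᾱ_k, R_k, S_k are ᾱ, R, S placed in tensor slots k, k+1. Then these operators, together with the right B^{⊗d}-action, define a right B≀H(d)-module structure on V_n^{⊗d}: the braid relations hold (H_kH_{k+1}H_k = H_{k+1}H_kH_{k+1} and H_iH_j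 = H_jH_i for |i−j| ≥ 2 as operators), ((v)·H_k)·H_k = ((v)·S_k)·H_k + (v)·R_k, and ((v)·H_k)·b = ((v)·σ_k(b))·H_k + (v)·ρ_k(b) for all v ∈ V_n^{⊗d} and b ∈ B^{⊗d}. -/

import Mathlib

open scoped TensorProduct
open PiTensorProduct MvPolynomial

variable (k F : Type*) (m : ℕ)

/-- Weak Frobenius elements of `F ⊗ F`: `(a⊗b)·Δ = Δ·(b⊗a)` for all `a, b ∈ F`. -/
def IsWeakFrobenius [CommSemiring k] [Ring F] [Algebra k F] (Δ : F ⊗[k] F) : Prop :=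
  ∀ a b : F, (a ⊗ₜ[k] b) * Δ = Δ * (b ⊗ₜ[k] a)

/-- Symmetric elements of `F ⊗ F`: fixed by the flip. -/
def IsSymmEl [CommSemiring k] [Ring F] [Algebra k F] (Δ : F ⊗[k] F) : Prop :=
  (Algebra.TensorProduct.comm k F F) Δ = Δ

section Emb3
variable [CommSemiring k] [Ring F] [Algebra k F]

/-- The embedding `F⊗F → F^{⊗3}` placing the two legs in positions 1, 2. -/
noncomputable def emb12 : F ⊗[k] F →ₗ[k] F ⊗[k] (F ⊗[k] F) :=
  LinearMap.lTensor F ((TensorProduct.mk k F F).flip 1)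

/-- The embedding `F⊗F → F^{⊗3}` placing the two legs in positions 2, 3. -/
noncomputable def emb23 : F ⊗[k] F →ₗ[k] F ⊗[k] (F ⊗[k] F) :=
  TensorProduct.mk k F (F ⊗[k] F) 1

end Emb3

section BD
variable [Field k] [Ring F] [Algebra k F]

/-- The tensor power `F^{⊗d}` for `d = m + 2`. -/
abbrev TPow := ⨂[k] (_ : Fin (m + 2)), F

/-- `B^{⊗d} = F^{⊗d}[x₁,…,x_d]`, modelled as `F^{⊗d} ⊗ 𝕜[x₁,…,x_d]`. -/
abbrev BD := TPow k F m ⊗[k] MvPolynomial (Fin (m + 2)) k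

/-- Insertion of `F` into the `j`-th tensor slot of `F^{⊗d}` (with `1` elsewhere). -/
noncomputable def ins (j : Fin (m + 2)) : F →ₗ[k] TPow k F m where
  toFun a := tprod k (Function.update (fun _ => (1 : F)) j a)
  map_add' a b := by
    simpa using MultilinearMap.map_update_add (tprod k) (fun _ => (1 : F)) j a b
  map_smul' c a := by
    simpa using MultilinearMap.map_update_smul (tprod k) (fun _ => (1 : F)) j c a

/-- The placement of `Y ∈ F⊗F` with its legs in tensor slots `i` and `j` of `F^{⊗d}`. -/
noncomputable def place (i j : Fin (m + 2)) : F ⊗[k] F →ₗ[k] TPow k F m :=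
  TensorProduct.lift
    ((LinearMap.mul k (TPow k F m)).compl₁₂ (ins k F m i) (ins k F m j))

/-- The place-permutation of the tensor slots `i, i+1` of `F^{⊗d}`. -/
noncomputable def sigmaT (i : Fin (m + 1)) : TPow k F m →ₗ[k] TPow k F m :=
  (PiTensorProduct.reindex k (fun _ => F)
      (Equiv.swap i.castSucc i.succ)).toLinearMap

/-- The automorphism `σ_i` of `B^{⊗d}`: swaps the tensor slots `i, i+1` of `F^{⊗d}`
and the variables `x_i, x_{i+1}`. -/
noncomputable def sigmaB (i : Fin (m + 1)) : BD k F m →ₗ[k] BD k F m :=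
  TensorProduct.map (sigmaT k F m i)
    (MvPolynomial.rename (⇑(Equiv.swap i.castSucc i.succ)) :
        MvPolynomial (Fin (m + 2)) k →ₐ[k] MvPolynomial (Fin (m + 2)) k).toLinearMap

/-- The variable `x_j` as an element of `B^{⊗d}`. -/
noncomputable def xv (j : Fin (m + 2)) : BD k F m :=
  (1 : TPow k F m) ⊗ₜ[k] (X j : MvPolynomial (Fin (m + 2)) k)

variable (Δf : Fin 2 → Fin 2 → F ⊗[k] F) (Rv : F ⊗[k] F)

/-- `β_i ∈ B^{⊗d}`: `β` placed in slots `i, i+1` with variables `x_i, x_{i+1}`. -/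
noncomputable def betaI (i : Fin (m + 1)) : BD k F m :=
  (place k F m i.castSucc i.succ (Δf 0 0)) ⊗ₜ[k] (1 : MvPolynomial (Fin (m + 2)) k)
    + (place k F m i.castSucc i.succ (Δf 1 0)) ⊗ₜ[k] (X i.castSucc)
    + (place k F m i.castSucc i.succ (Δf 0 1)) ⊗ₜ[k] (X i.succ)
    + (place k F m i.castSucc i.succ (Δf 1 1)) ⊗ₜ[k] (X i.castSucc * X i.succ)

/-- `S_i ∈ B^{⊗d}`: `S = Δ¹⁰ − Δ⁰¹` placed in slots `i, i+1`. -/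
noncomputable def SI (i : Fin (m + 1)) : BD k F m :=
  (place k F m i.castSucc i.succ (Δf 1 0 - Δf 0 1)) ⊗ₜ[k]
    (1 : MvPolynomial (Fin (m + 2)) k)

/-- `R_i ∈ B^{⊗d}`: `R` placed in slots `i, i+1`. -/
noncomputable def RI (i : Fin (m + 1)) : BD k F m :=
  (place k F m i.castSucc i.succ Rv) ⊗ₜ[k] (1 : MvPolynomial (Fin (m + 2)) k)

end BD

/-- The defining relations of the quantum wreath product of polynomial type
`B ≀ H(d)`, `d = m+2`: the algebra structure of `B^{⊗d}`, the braid relations,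
the quadratic relations and the wreath relations. -/
inductive QRel (k F : Type*) [Field k] [Ring F] [Algebra k F] (m : ℕ)
    (Δf : Fin 2 → Fin 2 → F ⊗[k] F) (Rv : F ⊗[k] F)
    (ρf : Fin (m + 1) → BD k F m →ₗ[k] BD k F m) :
    FreeAlgebra k (BD k F m ⊕ Fin (m + 1)) →
      FreeAlgebra k (BD k F m ⊕ Fin (m + 1)) → Prop
  | add_gen (a b : BD k F m) :
      QRel k F m Δf Rv ρf
        (FreeAlgebra.ι k (Sum.inl a) + FreeAlgebra.ι k (Sum.inl b))
        (FreeAlgebra.ι k (Sum.inl (a + b)))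
  | smul_gen (c : k) (a : BD k F m) :
      QRel k F m Δf Rv ρf (c • FreeAlgebra.ι k (Sum.inl a))
        (FreeAlgebra.ι k (Sum.inl (c • a)))
  | mul_gen (a b : BD k F m) :
      QRel k F m Δf Rv ρf
        (FreeAlgebra.ι k (Sum.inl a) * FreeAlgebra.ι k (Sum.inl b))
        (FreeAlgebra.ι k (Sum.inl (a * b)))
  | one_gen :
      QRel k F m Δf Rv ρf (FreeAlgebra.ι k (Sum.inl (1 : BD k F m))) 1
  | braid_far (i j : Fin (m + 1)) (h : (i : ℕ) + 2 ≤ (j : ℕ) ∨ (j : ℕ) + 2 ≤ (i : ℕ)) :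
      QRel k F m Δf Rv ρf
        (FreeAlgebra.ι k (Sum.inr i) * FreeAlgebra.ι k (Sum.inr j))
        (FreeAlgebra.ι k (Sum.inr j) * FreeAlgebra.ι k (Sum.inr i))
  | braid (i j : Fin (m + 1)) (h : (i : ℕ) + 1 = (j : ℕ)) :
      QRel k F m Δf Rv ρf
        (FreeAlgebra.ι k (Sum.inr i) * FreeAlgebra.ι k (Sum.inr j) *
          FreeAlgebra.ι k (Sum.inr i))
        (FreeAlgebra.ι k (Sum.inr j) * FreeAlgebra.ι k (Sum.inr i) *
          FreeAlgebra.ι k (Sum.inr j))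
  | quad (i : Fin (m + 1)) :
      QRel k F m Δf Rv ρf
        (FreeAlgebra.ι k (Sum.inr i) * FreeAlgebra.ι k (Sum.inr i))
        (FreeAlgebra.ι k (Sum.inl (SI k F m Δf i)) * FreeAlgebra.ι k (Sum.inr i)
          + FreeAlgebra.ι k (Sum.inl (RI k F m Rv i)))
  | wreath (i : Fin (m + 1)) (b : BD k F m) :
      QRel k F m Δf Rv ρf
        (FreeAlgebra.ι k (Sum.inr i) * FreeAlgebra.ι k (Sum.inl b))
        (FreeAlgebra.ι k (Sum.inl (sigmaB k F m i b)) * FreeAlgebra.ι k (Sum.inr i)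
          + FreeAlgebra.ι k (Sum.inl (ρf i b)))

section QWPdefs
variable [Field k] [Ring F] [Algebra k F]
variable (Δf : Fin 2 → Fin 2 → F ⊗[k] F) (Rv : F ⊗[k] F)
variable (ρf : Fin (m + 1) → BD k F m →ₗ[k] BD k F m)

/-- The quantum wreath product of polynomial type, presented by generators and
relations. -/
abbrev QWP := RingQuot (QRel k F m Δf Rv ρf)

/-- The canonical map `B^{⊗d} → B ≀ H(d)`. -/
noncomputable def embB (b : BD k F m) : QWP k F m Δf Rv ρf :=
  RingQuot.mkAlgHom k (QRel k F m Δf Rv ρf) (FreeAlgebra.ι k (Sum.inl b))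

/-- The Hecke-like generator `H_i ∈ B ≀ H(d)`. -/
noncomputable def genH (i : Fin (m + 1)) : QWP k F m Δf Rv ρf :=
  RingQuot.mkAlgHom k (QRel k F m Δf Rv ρf) (FreeAlgebra.ι k (Sum.inr i))

/-- The simple transposition `s_i = (i, i+1) ∈ S_d`, `d = m+2`. -/
def swPerm (i : Fin (m + 1)) : Equiv.Perm (Fin (m + 2)) :=
  Equiv.swap i.castSucc i.succ

/-- The number of inversions (Coxeter length) of a permutation. -/
noncomputable def invCount (w : Equiv.Perm (Fin (m + 2))) : ℕ :=
  (Finset.univ.filter fun p : Fin (m + 2) × Fin (m + 2) =>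
    p.1 < p.2 ∧ w p.2 < w p.1).card

/-- `L` is a reduced expression for `w`. -/
def IsReducedWord (L : List (Fin (m + 1))) (w : Equiv.Perm (Fin (m + 2))) : Prop :=
  (L.map (swPerm m)).prod = w ∧ L.length = invCount m w

end QWPdefs

section Tensorspace
variable [Field k] [Ring F] [Algebra k F] (n : ℕ)
variable (Δf : Fin 2 → Fin 2 → F ⊗[k] F) (αv Rv : F ⊗[k] F)
variable (ρf : Fin (m + 1) → BD k F m →ₗ[k] BD k F m)

/-- The tensor space `V_n^{⊗d} = ⊕_{i ∈ {1,…,n}^d} v_i·B^{⊗d}`, modelled as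
finitely supported `B^{⊗d}`-valued functions on the index tuples. -/
abbrev TSp := (Fin (m + 2) → Fin n) →₀ BD k F m

/-- Right multiplication by `b ∈ B^{⊗d}` on the tensor space (factorwise action). -/
noncomputable def mulBy (b : BD k F m) : TSp k F m n → TSp k F m n :=
  fun v => v.mapRange (· * b) (zero_mul b)

/-- `ᾱ_k ∈ B^{⊗d}`: `ᾱ = σ(α) + S` placed in slots `k, k+1`. -/
noncomputable def abarI (i : Fin (m + 1)) : BD k F m :=
  (place k F m i.castSucc i.succ
      ((Algebra.TensorProduct.comm k F F) αv + (Δf 1 0 - Δf 0 1))) ⊗ₜ[k]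
    (1 : MvPolynomial (Fin (m + 2)) k)

/-- The right action of the Hecke-like generator `H_k` on the tensor space. -/
noncomputable def Hop (i : Fin (m + 1)) : TSp k F m n → TSp k F m n :=
  fun v => v.sum fun idx b =>
    if idx i.castSucc < idx i.succ then
      Finsupp.single (fun j => idx ((Equiv.swap i.castSucc i.succ) j))
          (sigmaB k F m i b)
        + Finsupp.single idx (ρf i b)
    else if idx i.castSucc = idx i.succ then
      Finsupp.single idx (abarI k F m Δf αv i * sigmaB k F m i b)
        + Finsupp.single idx (ρf i b)
    else
      Finsupp.single (fun j => idx ((Equiv.swap i.castSucc i.succ) j))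
          (RI k F m Rv i * sigmaB k F m i b)
        + Finsupp.single idx (ρf i b + SI k F m Δf i * sigmaB k F m i b)

end Tensorspace

/-!
By (C2) the elements `β`, `S`, `R` and `ᾱ` are central, so that `ρ_k` is the twisted Demazure
operator `u ↦ β (u - s_k u) / (x_k - x_{k+1})`, which makes sense for every ordered pair of slots.
As `Δ^{ij}` is weak Frobenius, `Δ^{ij}_{pq} s_{pq}(t) = Δ^{ij}_{pq} t` for all `t ∈ F^{⊗d}`; hence
elements of `F ⊗ F` placed anywhere are scalars for `ρ`, and (A2) becomes a Yang-Baxter type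
identity for `β`. After clearing denominators it gives the three-term relation
`ρ₁₂ρ₂₃ = ρ₂₃ρ₁₃ + ρ₁₃ρ₁₂ - Sρ₁₃`, from which the braid relation between the `ρ_k` follows.

On the tensor space the wreath relation holds by construction, and it propagates the other relations
from a vector `v` to `v · u`, so these only have to be checked on basis vectors `v_f`. If the braid
relation holds at `v`, then by the quadratic relation it holds at `v H_k` and `v H_{k+1}`. Since
`v_f H_k = v_{f s_k}` whenever `f_k < f_{k+1}`, this reduces the braid relation to weakly increasing
tuples `f`, where the operators only permute the entries of `f` and multiply by `ᾱ`.
-/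

open Equiv
open MulOpposite (op op_zero op_one op_add op_smul op_neg op_sub)

lemma op_smul_single_one {X A : Type*} [Semiring A] (f : X) (u : A) :
    op u • Finsupp.single f (1 : A) = Finsupp.single f u := by
  rw [Finsupp.smul_single, op_smul_eq_mul, one_mul]

lemma swap_mul_swap_braid {X : Type*} [DecidableEq X] {a b c : X} (hab : a ≠ b) (hbc : b ≠ c)
    (hac : a ≠ c) : swap a b * swap b c * swap a b = swap b c * swap a b * swap b c := by
  rw [swap_mul_swap_mul_swap hab hac, swap_comm a b, swap_comm b c,
    swap_mul_swap_mul_swap hbc.symm hac.symm, swap_comm]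

section Demazure

variable {κ Z A : Type*} [DecidableEq κ] [CommRing Z] [MulSemiringAction (Perm κ) Z]

/-- The central elements `x`, `β`, `S`, `R`, `ᾱ` of `A = B^{⊗d}`, placed in every ordered pair of
slots, together with the identities from which the relations between the operators `H_k` follow.
Slots are labelled by an arbitrary type `κ`, and `Z` plays the role of the centre of `A`. The field
`α` is `ᾱ`; the element called `α` in (C1) is `α q p - S p q`, so that `α_mul` is (C1). -/
structure DemazureDatum (κ Z A : Type*) [DecidableEq κ] [CommRing Z]
    [MulSemiringAction (Perm κ) Z] [AddCommGroup A] [Module Z A] where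
  x : κ → Z
  β : κ → κ → Z
  S : κ → κ → Z
  R : κ → κ → Z
  α : κ → κ → Z
  smul_x (e : Perm κ) (p : κ) : e • x p = x (e p)
  smul_β (e : Perm κ) (p q : κ) : e • β p q = β (e p) (e q)
  smul_S (e : Perm κ) (p q : κ) : e • S p q = S (e p) (e q)
  smul_R (e : Perm κ) (p q : κ) : e • R p q = R (e p) (e q)
  smul_α (e : Perm κ) (p q : κ) : e • α p q = α (e p) (e q)
  S_comm (p q : κ) : S p q = S q p
  R_comm (p q : κ) : R p q = R q p
  β_mul_S (p q u v : κ) : β p q * swap p q • S u v = β p q * S u v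
  β_mul_R (p q u v : κ) : β p q * swap p q • R u v = β p q * R u v
  β_mul_α (p q u v : κ) : β p q * swap p q • α u v = β p q * α u v
  β_sub (p q : κ) : β p q - β q p = S p q * (x p - x q)
  α_mul (p q : κ) : α q p * α p q = R p q + S p q * α p q
  β_mul_β {p q r : κ} (hpq : p ≠ q) (hqr : q ≠ r) (hpr : p ≠ r) :
    (x p - x r) * (β p q * β q r) = (x q - x r) * (β p q * β p r) + (x p - x q) * (β p r * β q r)
      - S p q * (x p - x q) * (x q - x r) * β p r
  isSMulRegular {p q : κ} (hpq : p ≠ q) : IsSMulRegular A (x p - x q)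

namespace DemazureDatum

section Module

variable [AddCommGroup A] [Module Z A] (D : DemazureDatum κ Z A)

/-- Elements of `Z` on which the swap of `p` and `q` becomes trivial after multiplication by
`β p q`. They are scalars for all Demazure operators. -/
def IsConstant (z : Z) : Prop := ∀ p q, D.β p q * swap p q • z = D.β p q * z

variable {D} in
lemma smul_injective {p q : κ} (hpq : p ≠ q) {u v : A}
    (h : (D.x p - D.x q) • u = (D.x p - D.x q) • v) : u = v :=
  D.isSMulRegular hpq h

lemma isConstant_S (p q : κ) : D.IsConstant (D.S p q) := fun u v => D.β_mul_S u v p q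

lemma isConstant_R (p q : κ) : D.IsConstant (D.R p q) := fun u v => D.β_mul_R u v p q

lemma isConstant_α (p q : κ) : D.IsConstant (D.α p q) := fun u v => D.β_mul_α u v p q

lemma S_mul_β {p q r : κ} (hpq : p ≠ q) (hqr : q ≠ r) :
    D.S p q * D.β p r = D.S q r * D.β p r := by
  have h := D.β_mul_S p r p q
  rw [D.smul_S, swap_apply_left, swap_apply_of_ne_of_ne hpq.symm hqr, D.S_comm] at h
  linear_combination -h

/-- The datum obtained by exchanging the two slots of each pair and replacing `x` by `-x`; it
has the same operators and exchanges the two sides of the braid relation. -/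
def mirror : DemazureDatum κ Z A where
  x p := -D.x p
  β p q := D.β q p
  S := D.S
  R := D.R
  α := D.α
  smul_x e p := by rw [smul_neg, D.smul_x]
  smul_β e p q := D.smul_β e q p
  smul_S := D.smul_S
  smul_R := D.smul_R
  smul_α := D.smul_α
  S_comm := D.S_comm
  R_comm := D.R_comm
  β_mul_S p q := swap_comm q p ▸ D.β_mul_S q p
  β_mul_R p q := swap_comm q p ▸ D.β_mul_R q p
  β_mul_α p q := swap_comm q p ▸ D.β_mul_α q p
  β_sub p q := by rw [D.β_sub, D.S_comm]; ring
  α_mul := D.α_mul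
  β_mul_β {p q r} hpq hqr hpr := by
    rw [D.S_comm p q]
    linear_combination D.β_mul_β hqr.symm hpq.symm hpr.symm
      - (D.x r - D.x q) * (D.x q - D.x p) * D.S_mul_β hqr.symm hpq.symm
  isSMulRegular {p q} hpq := by
    simpa only [neg_sub_neg] using D.isSMulRegular hpq.symm

variable [DistribMulAction (Perm κ) A]

/-- Twisted Demazure operators `u ↦ β p q • (u - s u) / (x p - x q)`, where `s` swaps `p` and `q`:
the maps `ρ_k` of the wreath relation. -/
def IsDemazure (p q : κ) (ρ : A →+ A) : Prop :=
  ∀ u, (D.x p - D.x q) • ρ u = D.β p q • (u - swap p q • u)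

/-- The conjugate `e ∘ ρ ∘ e⁻¹`, which carries Demazure operators in the slots `p, q` to
Demazure operators in the slots `e p, e q`. -/
def conj (e : Perm κ) (ρ : A →+ A) : A →+ A :=
  (DistribSMul.toAddMonoidHom A e).comp (ρ.comp (DistribSMul.toAddMonoidHom A e⁻¹))

namespace IsDemazure

variable {D} {p q : κ} {ρ ρ' : A →+ A}

lemma mirror (h : D.IsDemazure p q ρ) : D.mirror.IsDemazure q p ρ := fun u => by
  simpa only [DemazureDatum.mirror, neg_sub_neg, swap_comm q p] using h u

lemma eq (h : D.IsDemazure p q ρ) (h' : D.IsDemazure p q ρ') (hpq : p ≠ q) : ρ = ρ' :=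
  AddMonoidHom.ext fun u => smul_injective hpq ((h u).trans (h' u).symm)

lemma apply_swap_smul (h : D.IsDemazure p q ρ) (hpq : p ≠ q) (u : A) :
    ρ (swap p q • u) = -ρ u := by
  refine smul_injective (D := D) hpq ?_
  rw [h, smul_neg, h, ← mul_smul (swap p q), swap_mul_self, one_smul, ← smul_neg, neg_sub]

lemma map_smul (h : D.IsDemazure p q ρ) (hpq : p ≠ q) {z : Z}
    [SMulDistribClass (Perm κ) Z A] (hz : D.IsConstant z) (u : A) :
    ρ (z • u) = z • ρ u := by
  refine smul_injective (D := D) hpq ?_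
  rw [h, smul_distrib_smul, smul_sub, ← mul_smul _ _ (swap p q • u), hz,
    smul_comm _ z (ρ u), h]
  generalize swap p q • u = v
  module

lemma swap_smul_smul (h : D.IsDemazure p q ρ) (hpq : p ≠ q) {z : Z} (hz : D.IsConstant z)
    (u : A) : (swap p q • z) • ρ u = z • ρ u := by
  refine smul_injective (D := D) hpq ?_
  rw [smul_comm, h, smul_comm _ z, h, smul_smul, smul_smul, mul_comm, hz, mul_comm]

lemma S_smul_apply (h : D.IsDemazure p q ρ) (hpq : p ≠ q) {r : κ} (hpr : p ≠ r)
    (hrq : r ≠ q) (u : A) : D.S p r • ρ u = D.S r q • ρ u := by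
  rw [← h.swap_smul_smul hpq (D.isConstant_S p r), D.smul_S, swap_apply_left,
    swap_apply_of_ne_of_ne hpr.symm hrq, D.S_comm]

lemma R_smul_apply (h : D.IsDemazure p q ρ) (hpq : p ≠ q) {r : κ} (hpr : p ≠ r)
    (hrq : r ≠ q) (u : A) : D.R p r • ρ u = D.R r q • ρ u := by
  rw [← h.swap_smul_smul hpq (D.isConstant_R p r), D.smul_R, swap_apply_left,
    swap_apply_of_ne_of_ne hpr.symm hrq, D.R_comm]

variable [SMulDistribClass (Perm κ) Z A]

lemma smul_smul_apply (h : D.IsDemazure p q ρ) (e : Perm κ) (u : A) :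
    (D.x (e p) - D.x (e q)) • e • ρ u = D.β (e p) (e q) • (e • u - e • swap p q • u) := by
  rw [← D.smul_x, ← D.smul_x, ← smul_sub, ← smul_distrib_smul, h, smul_distrib_smul, D.smul_β,
    smul_sub]

lemma conj (h : D.IsDemazure p q ρ) (e : Perm κ) : D.IsDemazure (e p) (e q) (conj e ρ) := by
  intro u
  rw [swap_apply_apply, mul_smul, mul_smul]
  have h' := h.smul_smul_apply e (e⁻¹ • u)
  rwa [smul_inv_smul] at h'

lemma smul_apply (h : D.IsDemazure p q ρ) (hpq : p ≠ q) {e : Perm κ}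
    (h' : D.IsDemazure (e p) (e q) ρ') (u : A) : e • ρ u = ρ' (e • u) := by
  rw [h'.eq (h.conj e) (e.injective.ne hpq)]
  exact congrArg (e • ρ ·) (inv_smul_smul e u).symm

lemma smul_apply_apply {r t : κ} {ρ₁ ρ₂ : A →+ A} (h : D.IsDemazure p q ρ)
    (h₁ : D.IsDemazure r t ρ₁) (hrt : r ≠ t)
    (h₂ : D.IsDemazure (swap p q r) (swap p q t) ρ₂) (u : A) :
    (D.x p - D.x q) • ρ (ρ₁ u) = D.β p q • (ρ₁ u - ρ₂ (swap p q • u)) := by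
  rw [h, h₁.smul_apply hrt h₂]

lemma swap_smul_apply (h : D.IsDemazure p q ρ) (hpq : p ≠ q) (u : A) :
    swap p q • ρ u = ρ u + D.S p q • (swap p q • u - u) := by
  refine smul_injective (D := D) hpq.symm ?_
  have e₁ := h.smul_smul_apply (swap p q) u
  rw [swap_apply_left, swap_apply_right, ← mul_smul (swap p q) (swap p q), swap_mul_self,
    one_smul] at e₁
  have e₂ := h u
  generalize swap p q • u = v at *
  generalize swap p q • ρ u = w at *
  linear_combination (norm := module) e₁ + e₂ + (D.β_sub p q) • (u - v)

lemma apply_apply (h : D.IsDemazure p q ρ) (hpq : p ≠ q) (u : A) :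
    ρ (ρ u) = D.S p q • ρ u := by
  refine smul_injective (D := D) hpq ?_
  rw [h, h.swap_smul_apply hpq, smul_comm _ (D.S p q), h]
  generalize swap p q • u = v
  module

lemma apply_comm {r t : κ} {ρ₁ ρ₂ : A →+ A} (h₁ : D.IsDemazure p q ρ₁) (h₂ : D.IsDemazure r t ρ₂)
    (hpq : p ≠ q) (hrt : r ≠ t) (hpr : p ≠ r) (hpt : p ≠ t) (hqr : q ≠ r) (hqt : q ≠ t) (u : A) :
    ρ₁ (ρ₂ u) = ρ₂ (ρ₁ u) := by
  have hss : swap r t • swap p q • u = swap p q • swap r t • u := by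
    rw [← mul_smul, ← mul_smul, (Perm.disjoint_swap_swap (by simp [*, Ne.symm])).commute.eq]
  refine smul_injective (D := D) hpq <| smul_injective (D := D) hrt ?_
  have e₁ := h₁.smul_apply_apply h₂ hrt (ρ₂ := ρ₂)
    (by rwa [swap_apply_of_ne_of_ne hpr.symm hqr.symm, swap_apply_of_ne_of_ne hpt.symm hqt.symm]) u
  have e₂ := h₂.smul_apply_apply h₁ hpq (ρ₂ := ρ₁)
    (by rwa [swap_apply_of_ne_of_ne hpr hpt, swap_apply_of_ne_of_ne hqr hqt]) u
  have e₃ := h₂ (swap p q • u)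
  rw [hss] at e₃
  have e₄ := h₂ u
  have e₅ := h₁ u
  have e₆ := h₁ (swap r t • u)
  generalize swap p q • swap r t • u = u₁₂ at *
  generalize swap p q • u = u₁ at *
  generalize swap r t • u = u₂ at *
  linear_combination (norm := module) (D.x r - D.x t) • e₁ + D.β p q • (e₄ - e₃)
    - (D.x p - D.x q) • e₂ - D.β r t • (e₅ - e₆)

end IsDemazure

section Braid

variable [SMulDistribClass (Perm κ) Z A]
  {D} {a b c : κ} {ρ₁₂ ρ₂₃ ρ₁₃ : A →+ A}

lemma IsDemazure.apply_apply_eq (h₁₂ : D.IsDemazure a b ρ₁₂) (h₂₃ : D.IsDemazure b c ρ₂₃)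
    (h₁₃ : D.IsDemazure a c ρ₁₃) (hab : a ≠ b) (hbc : b ≠ c) (hac : a ≠ c) (u : A) :
    ρ₁₂ (ρ₂₃ u) = ρ₂₃ (ρ₁₃ u) + ρ₁₃ (ρ₁₂ u) - D.S a b • ρ₁₃ u := by
  have hs : swap a b • swap b c • u = swap a c • swap a b • u := by
    rw [← mul_smul, ← mul_smul, mul_swap_eq_swap_mul, swap_apply_right,
      swap_apply_of_ne_of_ne hac.symm hbc.symm]
  have e₁ := h₁₂.smul_apply_apply h₂₃ hbc (ρ₂ := ρ₁₃)
    (by rwa [swap_apply_right, swap_apply_of_ne_of_ne hac.symm hbc.symm]) u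
  have e₂ := h₂₃.smul_apply_apply h₁₃ hac (ρ₂ := ρ₁₂)
    (by rwa [swap_apply_right, swap_apply_of_ne_of_ne hab hac]) u
  have e₃ := h₁₃ (ρ₁₂ u)
  have e₄ := h₁₂.smul_smul_apply (swap a c) u
  have e₅ := h₁₂ (swap b c • u)
  have e₆ := h₁₃ (swap a b • u)
  have e₁₂ := h₁₂ u
  have e₂₃ := h₂₃ u
  have e₁₃ := h₁₃ u
  rw [hs] at e₅
  rw [swap_apply_left, swap_apply_of_ne_of_ne hab.symm hbc,
    show D.β c b = D.β b c - D.S b c * (D.x b - D.x c) by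
      linear_combination -D.β_sub b c] at e₄
  refine smul_injective (D := D) hab <| smul_injective (D := D) hbc <|
    smul_injective (D := D) hac ?_
  generalize swap a c • swap a b • u = w at *
  generalize swap a b • u = u₁ at *
  generalize swap b c • u = u₂ at *
  generalize swap a c • u = u₃ at *
  generalize swap a c • ρ₁₂ u = v at *
  linear_combination (norm := module)
    ((D.x b - D.x c) * (D.x a - D.x c)) • e₁ + (D.β a b * (D.x a - D.x c)) • e₂₃
    - (D.β a b * (D.x b - D.x c)) • e₆
    - ((D.x a - D.x b) * (D.x a - D.x c)) • e₂ - (D.β b c * (D.x a - D.x b)) • e₁₃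
    + (D.β b c * (D.x a - D.x c)) • e₅
    - ((D.x a - D.x b) * (D.x b - D.x c)) • e₃ - (D.β a c * (D.x b - D.x c)) • e₁₂
    - (D.β a c * (D.x a - D.x b)) • e₄
    + ((D.x a - D.x b) * (D.x b - D.x c) * D.S a b) • e₁₃
    + (D.β_mul_β hab hbc hac) • (u - w)
    - (((D.x a - D.x b) * (D.x b - D.x c)) * D.S_mul_β hab hbc) • (u₃ - w)

lemma IsDemazure.braid (h₁₂ : D.IsDemazure a b ρ₁₂) (h₂₃ : D.IsDemazure b c ρ₂₃)
    (hab : a ≠ b) (hbc : b ≠ c) (hac : a ≠ c) (u : A) :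
    ρ₁₂ (ρ₂₃ (ρ₁₂ u)) = ρ₂₃ (ρ₁₂ (ρ₂₃ u)) := by
  obtain ⟨ρ₁₃, h₁₃⟩ : ∃ ρ₁₃, D.IsDemazure a c ρ₁₃ :=
    ⟨_, by simpa [swap_apply_of_ne_of_ne hac.symm hbc.symm] using h₂₃.conj (swap a b)⟩
  calc ρ₁₂ (ρ₂₃ (ρ₁₂ u))
    _ = ρ₂₃ (ρ₁₃ (ρ₁₂ u)) := by
      rw [h₁₂.apply_apply_eq h₂₃ h₁₃ hab hbc hac, h₁₂.apply_apply hab,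
        h₁₃.map_smul hac (D.isConstant_S a b), add_sub_cancel_right]
    _ = ρ₂₃ (ρ₁₂ (ρ₂₃ u)) := by
      rw [h₁₂.apply_apply_eq h₂₃ h₁₃ hab hbc hac, map_sub, map_add, h₂₃.apply_apply hbc,
        h₁₃.S_smul_apply hac hab hbc, h₂₃.map_smul hbc (D.isConstant_S b c), add_sub_cancel_left]

lemma IsDemazure.S_smul_swap_smul (h₁₂ : D.IsDemazure a b ρ₁₂) (h₂₃ : D.IsDemazure b c ρ₂₃)
    (hab : a ≠ b) (hbc : b ≠ c) (hac : a ≠ c) (u : A) :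
    D.S a b • swap a b • ρ₂₃ (swap a b • u) + ρ₁₂ (ρ₂₃ (swap a b • u)) + swap a b • ρ₂₃ (ρ₁₂ u) =
      ρ₂₃ (swap a b • ρ₂₃ u) := by
  obtain ⟨ρ₁₃, h₁₃⟩ : ∃ ρ₁₃, D.IsDemazure a c ρ₁₃ :=
    ⟨_, by simpa [swap_apply_of_ne_of_ne hac.symm hbc.symm] using h₂₃.conj (swap a b)⟩
  have hs (v : A) : swap a b • ρ₂₃ v = ρ₁₃ (swap a b • v) := h₂₃.smul_apply hbc
    (by rwa [swap_apply_right, swap_apply_of_ne_of_ne hac.symm hbc.symm]) v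
  rw [h₁₂.apply_apply_eq h₂₃ h₁₃ hab hbc hac, hs, hs, hs, h₁₂.apply_swap_smul hab,
    h₁₂.swap_smul_apply hab, map_add, h₁₃.map_smul hac (D.isConstant_S a b), map_neg,
    map_sub, ← mul_smul (swap a b), swap_mul_self, one_smul]
  module

lemma IsDemazure.R_smul_swap_smul (h₁₂ : D.IsDemazure a b ρ₁₂) (h₂₃ : D.IsDemazure b c ρ₂₃)
    (hab : a ≠ b) (hbc : b ≠ c) (hac : a ≠ c) (u : A) :
    D.R a b • swap a b • ρ₂₃ (swap a b • u) = D.R b c • swap b c • ρ₁₂ (swap b c • u) := by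
  obtain ⟨ρ₁₃, h₁₃⟩ : ∃ ρ₁₃, D.IsDemazure a c ρ₁₃ :=
    ⟨_, by simpa [swap_apply_of_ne_of_ne hac.symm hbc.symm] using h₂₃.conj (swap a b)⟩
  rw [h₂₃.smul_apply hbc (ρ' := ρ₁₃)
      (by rwa [swap_apply_right, swap_apply_of_ne_of_ne hac.symm hbc.symm]),
    h₁₂.smul_apply hab (ρ' := ρ₁₃)
      (by rwa [swap_apply_left, swap_apply_of_ne_of_ne hab hac]),
    ← mul_smul (swap a b), ← mul_smul (swap b c), swap_mul_self, swap_mul_self,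
    h₁₃.R_smul_apply hac hab hbc]

end Braid

end Module

section HeckeBasis

variable [Ring A] [Algebra Z A] {D : DemazureDatum κ Z A} {ι : Type*} [LinearOrder ι]

variable (D) in
/-- The image `v_f H` of the basis vector with index tuple `f` under the Hecke operator `H` in the
slots `p, q`. -/
noncomputable def heckeBasis (p q : κ) (f : κ → ι) : (κ → ι) →₀ A :=
  if f p < f q then .single (f ∘ swap p q) 1
  else if f p = f q then D.α p q • .single f 1
  else D.R p q • .single (f ∘ swap p q) 1 + D.S p q • .single f 1

lemma op_smul_heckeBasis (p q : κ) (f : κ → ι) (u : A) :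
    op u • D.heckeBasis p q f =
      if f p < f q then .single (f ∘ swap p q) u
      else if f p = f q then .single f (D.α p q • u)
      else .single (f ∘ swap p q) (D.R p q • u) + .single f (D.S p q • u) := by
  rw [heckeBasis]
  split_ifs <;> simp

end HeckeBasis

section RightModule

variable [Ring A] [Algebra Z A] [MulSemiringAction (Perm κ) A] {D : DemazureDatum κ Z A}

namespace IsDemazure

variable {p q : κ} {ρ : A →+ A}

lemma apply_mul (h : D.IsDemazure p q ρ) (hpq : p ≠ q) (u v : A) :
    ρ (u * v) = ρ u * swap p q • v + u * ρ v := by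
  refine smul_injective (D := D) hpq ?_
  rw [h, smul_mul', smul_add, ← smul_mul_assoc, h, ← mul_smul_comm, h]
  simp only [smul_mul_assoc, mul_smul_comm, ← smul_add]
  noncomm_ring

lemma apply_one (h : D.IsDemazure p q ρ) (hpq : p ≠ q) : ρ 1 = 0 := by
  refine smul_injective (D := D) hpq ?_
  rw [h, smul_one, sub_self, smul_zero, smul_zero]

end IsDemazure

variable {M : Type*} [AddCommGroup M] [Module Aᵐᵒᵖ M]

variable (D) in
/-- Operators `T` on a right `A`-module `M` satisfying the wreath relation
`(v · u) T = (v T) · s(u) + v · ρ(u)`. Right modules are encoded as `Aᵐᵒᵖ`-modules, so that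
`op u • v` stands for `v · u`. -/
structure IsWreathOperator (p q : κ) (ρ : A →+ A) (T : M →+ M) : Prop where
  isDemazure : D.IsDemazure p q ρ
  apply_op_smul (u : A) (v : M) : T (op u • v) = op (swap p q • u) • T v + op (ρ u) • v

variable (D) in
/-- Operators satisfying both the wreath relation and the quadratic relation `T² = S T + R`. -/
structure IsHeckeOperator [Module Z M] (p q : κ) (ρ : A →+ A) (T : M →+ M) : Prop
    extends D.IsWreathOperator p q ρ T where
  apply_apply (v : M) : T (T v) = D.S p q • T v + D.R p q • v

lemma IsHeckeOperator.mirror [Module Z M] {p q : κ} {ρ : A →+ A} {T : M →+ M}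
    (h : D.IsHeckeOperator p q ρ T) :
    D.mirror.IsHeckeOperator q p ρ T where
  isDemazure := h.isDemazure.mirror
  apply_op_smul := swap_comm p q ▸ h.apply_op_smul
  apply_apply v := by
    rw [show D.mirror.S q p = D.S p q from D.S_comm q p,
      show D.mirror.R q p = D.R p q from D.R_comm q p, h.apply_apply]

lemma IsWreathOperator.op_smul_apply {p q : κ} {ρ : A →+ A} {T : M →+ M}
    (h : D.IsWreathOperator p q ρ T) (hpq : p ≠ q) (u : A) (v : M) :
    op u • T v = T (op (swap p q • u) • v) + op (ρ u) • v := by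
  rw [h.apply_op_smul, ← mul_smul (swap p q), swap_mul_self, one_smul,
    h.isDemazure.apply_swap_smul hpq, op_neg, neg_smul, neg_add_cancel_right]

section Wreath

variable [SMulDistribClass (Perm κ) Z A] {p q r t : κ} {ρ ρ' : A →+ A} {T T' : M →+ M}

lemma IsWreathOperator.comm_op_smul
    (h : D.IsWreathOperator p q ρ T) (h' : D.IsWreathOperator r t ρ' T')
    (hpq : p ≠ q) (hrt : r ≠ t) (hpr : p ≠ r) (hpt : p ≠ t) (hqr : q ≠ r) (hqt : q ≠ t)
    {v : M} (hv : T (T' v) = T' (T v)) (u : A) :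
    T (T' (op u • v)) = T' (T (op u • v)) := by
  have hs : swap p q • swap r t • u = swap r t • swap p q • u := by
    rw [← mul_smul, ← mul_smul, (Perm.disjoint_swap_swap (by simp [*, Ne.symm])).commute.eq]
  have hρs : ρ (swap r t • u) = swap r t • ρ u := (h.isDemazure.smul_apply hpq
    (by rw [swap_apply_of_ne_of_ne hpr hpt, swap_apply_of_ne_of_ne hqr hqt]
        exact h.isDemazure) u).symm
  have hsρ : swap p q • ρ' u = ρ' (swap p q • u) := h'.isDemazure.smul_apply hrt
    (by rw [swap_apply_of_ne_of_ne hpr.symm hqr.symm, swap_apply_of_ne_of_ne hpt.symm hqt.symm]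
        exact h'.isDemazure) u
  simp only [h.apply_op_smul, h'.apply_op_smul, map_add]
  rw [hv, hs, hρs, hsρ, h.isDemazure.apply_comm h'.isDemazure hpq hrt hpr hpt hqr hqt]
  abel

variable [Module Z M] [IsScalarTower Z Aᵐᵒᵖ M]

lemma IsWreathOperator.map_smul (h : D.IsWreathOperator p q ρ T) (hpq : p ≠ q) {z : Z}
    (hz : D.IsConstant z) (v : M) : T (z • v) = (swap p q • z) • T v := by
  have op_smul_one (z : Z) (v : M) : z • v = op (z • (1 : A)) • v := by
    rw [op_smul, op_one, smul_assoc, one_smul]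
  rw [op_smul_one, h.apply_op_smul, h.isDemazure.map_smul hpq hz, h.isDemazure.apply_one hpq,
    smul_zero, op_zero, zero_smul, add_zero, smul_distrib_smul, smul_one, ← op_smul_one]

lemma IsWreathOperator.apply_apply_op_smul (h : D.IsWreathOperator p q ρ T) (hpq : p ≠ q) {v : M}
    (hv : T (T v) = D.S p q • T v + D.R p q • v) (u : A) :
    T (T (op u • v)) = D.S p q • T (op u • v) + D.R p q • op u • v := by
  simp only [h.apply_op_smul, map_add]
  rw [hv, ← mul_smul (swap p q), swap_mul_self, one_smul, h.isDemazure.apply_swap_smul hpq,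
    h.isDemazure.swap_smul_apply hpq, h.isDemazure.apply_apply hpq]
  simp only [op_add, op_sub, op_smul, op_neg, add_smul, sub_smul, neg_smul, smul_assoc, smul_add,
    smul_sub, smul_comm (op u) (D.S p q), smul_comm (op u) (D.R p q)]
  abel

end Wreath

namespace IsHeckeOperator

variable [SMulDistribClass (Perm κ) Z A] [Module Z M] [IsScalarTower Z Aᵐᵒᵖ M]
  {a b c : κ} {ρ₁₂ ρ₂₃ : A →+ A} {T₁₂ T₂₃ : M →+ M}

lemma apply_apply_eq_apply_S_smul (h : D.IsHeckeOperator a b ρ₁₂ T₁₂) (hab : a ≠ b) (v : M) :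
    T₁₂ (T₁₂ v) = T₁₂ (D.S a b • v) + D.R a b • v := by
  rw [h.apply_apply, h.map_smul hab (D.isConstant_S a b), D.smul_S, swap_apply_left,
    swap_apply_right, D.S_comm]

lemma braid_op_smul (h₁₂ : D.IsHeckeOperator a b ρ₁₂ T₁₂) (h₂₃ : D.IsHeckeOperator b c ρ₂₃ T₂₃)
    (hab : a ≠ b) (hbc : b ≠ c) (hac : a ≠ c)
    {v : M} (hv : T₁₂ (T₂₃ (T₁₂ v)) = T₂₃ (T₁₂ (T₂₃ v))) (u : A) :
    T₁₂ (T₂₃ (T₁₂ (op u • v))) = T₂₃ (T₁₂ (T₂₃ (op u • v))) := by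
  have hρ₁₂ := h₁₂.isDemazure
  have hρ₂₃ := h₂₃.isDemazure
  have hs : swap a b • swap b c • swap a b • u = swap b c • swap a b • swap b c • u := by
    simp only [← mul_smul, ← mul_assoc, swap_mul_swap_braid hab hbc hac]
  have e₁ : ρ₁₂ (swap b c • swap a b • u) = swap b c • swap a b • ρ₂₃ u := by
    rw [← mul_smul, ← mul_smul]
    exact (hρ₂₃.smul_apply hbc (by simp [swap_apply_of_ne_of_ne, *, Ne.symm]) u).symm
  have e₂ : ρ₂₃ (swap a b • swap b c • u) = swap a b • swap b c • ρ₁₂ u := by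
    rw [← mul_smul, ← mul_smul]
    exact (hρ₁₂.smul_apply hab (by simp [swap_apply_of_ne_of_ne, *, Ne.symm]) u).symm
  have e₃ := hρ₁₂.S_smul_swap_smul hρ₂₃ hab hbc hac u
  have e₄ := hρ₂₃.mirror.S_smul_swap_smul hρ₁₂.mirror hbc.symm hab.symm hac.symm u
  have e₅ := hρ₁₂.R_smul_swap_smul hρ₂₃ hab hbc hac u
  rw [swap_comm c b, show D.mirror.S c b = D.S b c from D.S_comm c b] at e₄
  simp only [h₁₂.apply_op_smul, h₂₃.apply_op_smul, map_add, h₁₂.apply_apply, h₂₃.apply_apply]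
  rw [hv, hs, hρ₁₂.braid hρ₂₃ hab hbc hac, ← e₃, ← e₄, e₁, e₂]
  have e₆ := congrArg (op · • v) e₅
  simp only [op_add, op_smul (D.S _ _), op_smul (D.R _ _), add_smul, smul_assoc, smul_add,
    smul_comm (op _) (D.S _ _), smul_comm (op _) (D.R _ _)] at e₆ ⊢
  rw [e₆]
  abel

lemma braid_apply_left (h₁₂ : D.IsHeckeOperator a b ρ₁₂ T₁₂)
    (h₂₃ : D.IsHeckeOperator b c ρ₂₃ T₂₃) (hab : a ≠ b) (hbc : b ≠ c) (hac : a ≠ c)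
    {v : M} (hv : T₁₂ (T₂₃ (T₁₂ v)) = T₂₃ (T₁₂ (T₂₃ v))) :
    T₁₂ (T₂₃ (T₁₂ (T₁₂ v))) = T₂₃ (T₁₂ (T₂₃ (T₁₂ v))) := by
  have hs : swap a b • swap b c • D.S a b = D.S b c := by
    simp [D.smul_S, swap_apply_of_ne_of_ne, *, Ne.symm]
  have hr : swap a b • swap b c • D.R a b = D.R b c := by
    simp [D.smul_R, swap_apply_of_ne_of_ne, *, Ne.symm]
  have hc : D.IsConstant (swap b c • D.S a b) := by rw [D.smul_S]; exact D.isConstant_S _ _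
  have hc' : D.IsConstant (swap b c • D.R a b) := by rw [D.smul_R]; exact D.isConstant_R _ _
  rw [h₁₂.apply_apply, map_add, map_add, h₂₃.map_smul hbc (D.isConstant_S a b),
    h₂₃.map_smul hbc (D.isConstant_R a b), h₁₂.map_smul hab hc, h₁₂.map_smul hab hc', hs, hr, hv,
    h₂₃.apply_apply]

lemma braid_apply_right (h₁₂ : D.IsHeckeOperator a b ρ₁₂ T₁₂)
    (h₂₃ : D.IsHeckeOperator b c ρ₂₃ T₂₃) (hab : a ≠ b) (hbc : b ≠ c) (hac : a ≠ c)
    {v : M} (hv : T₁₂ (T₂₃ (T₁₂ v)) = T₂₃ (T₁₂ (T₂₃ v))) :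
    T₁₂ (T₂₃ (T₁₂ (T₂₃ v))) = T₂₃ (T₁₂ (T₂₃ (T₂₃ v))) :=
  (h₂₃.mirror.braid_apply_left h₁₂.mirror hbc.symm hab.symm hac.symm hv.symm).symm

end IsHeckeOperator

section HeckeOp

variable {ι : Type*} [LinearOrder ι]

variable (D) in
/-- The Hecke operator `v_f · u ↦ (v_f H) · s(u) + v_f · ρ(u)` of the tensor space in the
slots `p, q`. -/
noncomputable def heckeOp (p q : κ) (ρ : A →+ A) : ((κ → ι) →₀ A) →+ ((κ → ι) →₀ A) :=
  Finsupp.liftAddHom fun f =>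
    { toFun u := op (swap p q • u) • D.heckeBasis p q f + .single f (ρ u)
      map_zero' := by simp
      map_add' u v := by
        simp only [smul_add, op_add, add_smul, map_add, Finsupp.single_add]
        abel }

lemma heckeOp_single (p q : κ) (ρ : A →+ A) (f : κ → ι) (u : A) :
    D.heckeOp p q ρ (.single f u) = op (swap p q • u) • D.heckeBasis p q f + .single f (ρ u) :=
  Finsupp.liftAddHom_apply_single _ _ _

lemma isWreathOperator_heckeOp {p q : κ} (hpq : p ≠ q) {ρ : A →+ A} (h : D.IsDemazure p q ρ) :
    D.IsWreathOperator p q ρ (D.heckeOp (ι := ι) p q ρ) where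
  isDemazure := h
  apply_op_smul u v := by
    induction v using Finsupp.induction_linear with
    | zero => simp
    | add v w hv hw =>
      simp only [smul_add, map_add, hv, hw]
      abel
    | single f a =>
      rw [Finsupp.smul_single, op_smul_eq_mul, heckeOp_single, heckeOp_single,
        h.apply_mul hpq, smul_mul', MulOpposite.op_mul, mul_smul, smul_add, Finsupp.single_add,
        Finsupp.smul_single, Finsupp.smul_single, op_smul_eq_mul,
        op_smul_eq_mul, add_assoc]

section Basis

variable {p q : κ} {ρ : A →+ A} {f : κ → ι}

lemma heckeOp_single_one (hpq : p ≠ q) (h : D.IsDemazure p q ρ) (f : κ → ι) :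
    D.heckeOp p q ρ (.single f 1) = D.heckeBasis p q f := by
  rw [heckeOp_single, h.apply_one hpq, smul_one, op_one, one_smul, Finsupp.single_zero, add_zero]

lemma heckeOp_single_one_of_lt (hpq : p ≠ q) (h : D.IsDemazure p q ρ) (hf : f p < f q) :
    D.heckeOp p q ρ (.single f 1) = .single (f ∘ swap p q) 1 := by
  rw [heckeOp_single_one hpq h, heckeBasis, if_pos hf]

lemma heckeOp_single_one_of_eq (hpq : p ≠ q) (h : D.IsDemazure p q ρ) (hf : f p = f q) :
    D.heckeOp p q ρ (.single f 1) = D.α p q • .single f 1 := by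
  rw [heckeOp_single_one hpq h, heckeBasis, if_neg hf.not_lt, if_pos hf]

lemma heckeOp_single_one_of_gt (hpq : p ≠ q) (h : D.IsDemazure p q ρ) (hf : f q < f p) :
    D.heckeOp p q ρ (.single f 1) =
      D.R p q • .single (f ∘ swap p q) 1 + D.S p q • .single f 1 := by
  rw [heckeOp_single_one hpq h, heckeBasis, if_neg hf.not_gt, if_neg hf.ne']

end Basis

variable [SMulDistribClass (Perm κ) Z A]

lemma isHeckeOperator_heckeOp {p q : κ} (hpq : p ≠ q) {ρ : A →+ A} (h : D.IsDemazure p q ρ) :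
    D.IsHeckeOperator p q ρ (D.heckeOp (ι := ι) p q ρ) where
  toIsWreathOperator := isWreathOperator_heckeOp hpq h
  apply_apply v := by
    have hT := isWreathOperator_heckeOp (ι := ι) hpq h
    have hss (f : κ → ι) : (f ∘ swap p q) ∘ swap p q = f := by ext; simp
    induction v using Finsupp.induction_linear with
    | zero => simp
    | add v w hv hw =>
      simp only [smul_add, map_add, hv, hw]
      abel
    | single f a =>
      rw [← op_smul_single_one]
      refine hT.apply_apply_op_smul hpq ?_ a
      rcases lt_trichotomy (f p) (f q) with hf | hf | hf
      · rw [heckeOp_single_one_of_lt hpq h hf, heckeOp_single_one_of_gt hpq h (by simpa), hss,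
          add_comm]
      · rw [heckeOp_single_one_of_eq hpq h hf, hT.map_smul hpq (D.isConstant_α p q),
          heckeOp_single_one_of_eq hpq h hf, D.smul_α, swap_apply_left, swap_apply_right, smul_smul,
          D.α_mul, add_smul, mul_smul, add_comm]
      · rw [heckeOp_single_one_of_gt hpq h hf, map_add, hT.map_smul hpq (D.isConstant_R p q),
          hT.map_smul hpq (D.isConstant_S p q), heckeOp_single_one_of_lt hpq h (by simpa), hss,
          heckeOp_single_one_of_gt hpq h hf, D.smul_R, D.smul_S, swap_apply_left, swap_apply_right,
          D.R_comm q p, D.S_comm q p, add_comm]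

lemma heckeOp_comm {p q r t : κ} {ρ ρ' : A →+ A} (h : D.IsDemazure p q ρ)
    (h' : D.IsDemazure r t ρ') (hpq : p ≠ q) (hrt : r ≠ t) (hpr : p ≠ r) (hpt : p ≠ t)
    (hqr : q ≠ r) (hqt : q ≠ t) (v : (κ → ι) →₀ A) :
    D.heckeOp p q ρ (D.heckeOp r t ρ' v) = D.heckeOp r t ρ' (D.heckeOp p q ρ v) := by
  have hT := isWreathOperator_heckeOp (ι := ι) hpq h
  have hT' := isWreathOperator_heckeOp (ι := ι) hrt h'
  induction v using Finsupp.induction_linear with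
  | zero => simp
  | add v w hv hw => simp only [map_add, hv, hw]
  | single f a =>
    rw [← op_smul_single_one]
    refine hT.comm_op_smul hT' hpq hrt hpr hpt hqr hqt ?_ a
    have hss : (f ∘ swap r t) ∘ swap p q = (f ∘ swap p q) ∘ swap r t := by
      rw [Function.comp_assoc, Function.comp_assoc, ← Perm.coe_mul, ← Perm.coe_mul,
        (Perm.disjoint_swap_swap (by simp [*, Ne.symm])).commute.eq]
    rcases lt_trichotomy (f p) (f q) with hf | hf | hf <;>
    rcases lt_trichotomy (f r) (f t) with hf' | hf' | hf' <;>
    · simp only [heckeOp_single_one_of_lt, heckeOp_single_one_of_eq, heckeOp_single_one_of_gt,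
        Function.comp_apply, map_add, hT.map_smul, hT'.map_smul, D.isConstant_α, D.isConstant_R,
        D.isConstant_S, D.smul_α, D.smul_R, D.smul_S, swap_apply_of_ne_of_ne, ne_eq,
        not_false_eq_true, hpr.symm, hpt.symm, hqr.symm, hqt.symm, *] <;>
      module

section Braid

variable {a b c : κ} {ρ₁₂ ρ₂₃ : A →+ A}

lemma heckeOp_braid_single_of_le_of_le (h₁₂ : D.IsDemazure a b ρ₁₂) (h₂₃ : D.IsDemazure b c ρ₂₃)
    (hab : a ≠ b) (hbc : b ≠ c) (hac : a ≠ c) {f : κ → ι} (hf : f a ≤ f b) (hf' : f b ≤ f c) :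
    D.heckeOp a b ρ₁₂ (D.heckeOp b c ρ₂₃ (D.heckeOp a b ρ₁₂ (.single f 1))) =
      D.heckeOp b c ρ₂₃ (D.heckeOp a b ρ₁₂ (D.heckeOp b c ρ₂₃ (.single f 1))) := by
  have hT := isWreathOperator_heckeOp (ι := ι) hab h₁₂
  have hT' := isWreathOperator_heckeOp (ι := ι) hbc h₂₃
  have hc : swap a b c = c := swap_apply_of_ne_of_ne hac.symm hbc.symm
  have ha : swap b c a = a := swap_apply_of_ne_of_ne hab hac
  rcases hf.lt_or_eq with hf | hf <;> rcases hf'.lt_or_eq with hf' | hf'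
  · have hf'' := hf.trans hf'
    rw [heckeOp_single_one_of_lt hab h₁₂ hf, heckeOp_single_one_of_lt hbc h₂₃ (by simpa [hc]),
      heckeOp_single_one_of_lt hab h₁₂ (by simpa [ha, hc]),
      heckeOp_single_one_of_lt hbc h₂₃ hf', heckeOp_single_one_of_lt hab h₁₂ (by simpa [ha]),
      heckeOp_single_one_of_lt hbc h₂₃ (by simpa [ha, hc])]
    simp only [Function.comp_assoc, ← Perm.coe_mul, swap_mul_swap_braid hab hbc hac]
  · rw [heckeOp_single_one_of_lt hab h₁₂ hf,
      heckeOp_single_one_of_lt hbc h₂₃ (by simpa [hc] using hf.trans_eq hf'),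
      heckeOp_single_one_of_eq hab h₁₂ (by simpa [ha, hc]), heckeOp_single_one_of_eq hbc h₂₃ hf',
      hT.map_smul hab (D.isConstant_α b c), heckeOp_single_one_of_lt hab h₁₂ hf, D.smul_α,
      hT'.map_smul hbc (D.isConstant_α _ _), D.smul_α, swap_apply_right, hc, ha, swap_apply_right,
      heckeOp_single_one_of_lt hbc h₂₃ (by simpa [hc] using hf.trans_eq hf')]
  · rw [heckeOp_single_one_of_eq hab h₁₂ hf, hT'.map_smul hbc (D.isConstant_α a b),
      heckeOp_single_one_of_lt hbc h₂₃ hf', D.smul_α, hT.map_smul hab (D.isConstant_α _ _),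
      D.smul_α, ha, swap_apply_left, swap_apply_left, hc,
      heckeOp_single_one_of_lt hab h₁₂ (by simpa [ha] using hf.trans_lt hf'),
      heckeOp_single_one_of_eq hbc h₂₃ (by simpa [ha, hc])]
  · rw [heckeOp_single_one_of_eq hab h₁₂ hf, heckeOp_single_one_of_eq hbc h₂₃ hf',
      hT'.map_smul hbc (D.isConstant_α a b), heckeOp_single_one_of_eq hbc h₂₃ hf',
      hT.map_smul hab (D.isConstant_α b c), heckeOp_single_one_of_eq hab h₁₂ hf]
    simp only [D.smul_α, ha, hc, swap_apply_left, swap_apply_right, hT.map_smul hab,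
      hT'.map_smul hbc, D.isConstant_α, heckeOp_single_one_of_eq hab h₁₂ hf,
      heckeOp_single_one_of_eq hbc h₂₃ hf']
    module

lemma heckeOp_braid_single_one (h₁₂ : D.IsDemazure a b ρ₁₂) (h₂₃ : D.IsDemazure b c ρ₂₃)
    (hab : a ≠ b) (hbc : b ≠ c) (hac : a ≠ c) (f : κ → ι) :
    D.heckeOp a b ρ₁₂ (D.heckeOp b c ρ₂₃ (D.heckeOp a b ρ₁₂ (.single f 1))) =
      D.heckeOp b c ρ₂₃ (D.heckeOp a b ρ₁₂ (D.heckeOp b c ρ₂₃ (.single f 1))) := by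
  have hT := isHeckeOperator_heckeOp (ι := ι) hab h₁₂
  have hT' := isHeckeOperator_heckeOp (ι := ι) hbc h₂₃
  let Braid (f : κ → ι) : Prop :=
    D.heckeOp a b ρ₁₂ (D.heckeOp b c ρ₂₃ (D.heckeOp a b ρ₁₂ (.single f 1))) =
      D.heckeOp b c ρ₂₃ (D.heckeOp a b ρ₁₂ (D.heckeOp b c ρ₂₃ (.single f 1)))
  change Braid f
  have hc : swap a b c = c := swap_apply_of_ne_of_ne hac.symm hbc.symm
  have ha : swap b c a = a := swap_apply_of_ne_of_ne hab hac
  have hsorted {f : κ → ι} : f a ≤ f b → f b ≤ f c → Braid f :=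
    heckeOp_braid_single_of_le_of_le h₁₂ h₂₃ hab hbc hac
  have hleft {f : κ → ι} (hf : f b < f a) (h : Braid (f ∘ swap a b)) : Braid f := by
    have := hT.braid_apply_left hT' hab hbc hac h
    rwa [heckeOp_single_one_of_lt hab h₁₂ (by simpa), Function.comp_assoc, ← Perm.coe_mul,
      swap_mul_self] at this
  have hright {f : κ → ι} (hf : f c < f b) (h : Braid (f ∘ swap b c)) : Braid f := by
    have := hT.braid_apply_right hT' hab hbc hac h
    rwa [heckeOp_single_one_of_lt hbc h₂₃ (by simpa), Function.comp_assoc, ← Perm.coe_mul,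
      swap_mul_self] at this
  have hle {f : κ → ι} (hf : f b ≤ f c) : Braid f := by
    rcases le_or_gt (f a) (f b) with hf' | hf'
    · exact hsorted hf' hf
    refine hleft hf' ?_
    rcases le_or_gt (f a) (f c) with hf'' | hf''
    · exact hsorted (by simpa using hf'.le) (by simpa [hc])
    · exact hright (by simpa [hc]) (hsorted (by simpa [ha, hc]) (by simpa [ha, hc] using hf''.le))
  rcases le_or_gt (f b) (f c) with hf | hf
  · exact hle hf
  · exact hright hf (hle (by simpa using hf.le))

lemma heckeOp_braid (h₁₂ : D.IsDemazure a b ρ₁₂) (h₂₃ : D.IsDemazure b c ρ₂₃)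
    (hab : a ≠ b) (hbc : b ≠ c) (hac : a ≠ c) (v : (κ → ι) →₀ A) :
    D.heckeOp a b ρ₁₂ (D.heckeOp b c ρ₂₃ (D.heckeOp a b ρ₁₂ v)) =
      D.heckeOp b c ρ₂₃ (D.heckeOp a b ρ₁₂ (D.heckeOp b c ρ₂₃ v)) := by
  induction v using Finsupp.induction_linear with
  | zero => simp
  | add v w hv hw => simp only [map_add, hv, hw]
  | single f u =>
    rw [← op_smul_single_one]
    exact (isHeckeOperator_heckeOp hab h₁₂).braid_op_smul (isHeckeOperator_heckeOp hbc h₂₃)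
      hab hbc hac (heckeOp_braid_single_one h₁₂ h₂₃ hab hbc hac f) u

end Braid

end HeckeOp

end RightModule

end DemazureDatum

end Demazure

section CenterAction

variable {G A : Type*} [Group G] [Ring A] [MulSemiringAction G A]

instance isInvariantSubring_center : IsInvariantSubring G (Subring.center A) where
  smul_mem g x hx := by
    rw [Subring.mem_center_iff] at hx ⊢
    intro y
    rw [← smul_inv_smul g y, ← smul_mul', hx, smul_mul']

instance smulDistribClass_center : SMulDistribClass G (Subring.center A) A where
  smul_distrib_smul g z a := smul_mul' g (z : A) a

end CenterAction

section Bilinear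

variable {Z : Type*} [CommRing Z]

/-- The polynomial with coefficients `d` of degree at most one in each of `x` and `y`, the shape
of `β`. -/
def biaffine (d : Fin 2 → Fin 2 → Z) (x y : Z) : Z :=
  d 0 0 + d 1 0 * x + d 0 1 * y + d 1 1 * (x * y)

variable {d e f : Fin 2 → Fin 2 → Z}

lemma biaffine_mul_biaffine (hdf : ∀ i j i' j', d i j * f i' j' = d i j * e i' j')
    (hfe : ∀ i j i' j', f i j * e i' j' = d i j * e i' j')
    (hde : ∀ i j i' j', d i j * e i' j' = d i' j' * e i j)
    (hA : d 0 0 * e 1 1 = d 0 1 * e 1 0) (x y z : Z) :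
    (x - z) * (biaffine d x y * biaffine e y z) =
      (y - z) * (biaffine d x y * biaffine f x z) + (x - y) * (biaffine f x z * biaffine e y z)
        - (d 1 0 - d 0 1) * (x - y) * (y - z) * biaffine f x z := by
  have hdf' (i j : Fin 2) : d i j * biaffine f x z = d i j * biaffine e x z := by
    unfold biaffine
    linear_combination hdf i j 0 0 + x * hdf i j 1 0 + z * hdf i j 0 1 + x * z * hdf i j 1 1
  have hfe' (i j : Fin 2) : biaffine f x z * e i j = biaffine d x z * e i j := by
    unfold biaffine
    linear_combination hfe 0 0 i j + x * hfe 1 0 i j + z * hfe 0 1 i j + x * z * hfe 1 1 i j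
  have h₁ : biaffine d x y * biaffine f x z = biaffine d x y * biaffine e x z := by
    rw [biaffine]
    linear_combination hdf' 0 0 + x * hdf' 1 0 + y * hdf' 0 1 + x * y * hdf' 1 1
  have h₂ : biaffine f x z * biaffine e y z = biaffine d x z * biaffine e y z := by
    rw [biaffine.eq_def e y z]
    linear_combination hfe' 0 0 + y * hfe' 1 0 + z * hfe' 0 1 + y * z * hfe' 1 1
  have h₃ : (d 1 0 - d 0 1) * biaffine f x z = (d 1 0 - d 0 1) * biaffine e x z := by
    linear_combination hdf' 1 0 - hdf' 0 1
  rw [h₁, h₂, mul_right_comm _ (y - z), mul_right_comm _ (x - y), h₃]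
  unfold biaffine
  linear_combination (x - y) * (y - z) * (hde 1 0 0 0 + x * hde 1 1 0 0 + z * hde 1 0 0 1
    + x * z * hde 1 1 0 1 + (x - z) * hA)

end Bilinear

section TensorPower

variable {k F m} [Field k] [Ring F] [Algebra k F]

section Place

variable {p q r : Fin (m + 2)}

lemma commute_ins (h : p ≠ q) (a b : F) : Commute (ins k F m p a) (ins k F m q b) :=
  Commute.tprod (Pi.mulSingle_commute (f := fun _ => F) h a b)

lemma place_tmul (p q : Fin (m + 2)) (a b : F) :
    place k F m p q (a ⊗ₜ b) = ins k F m p a * ins k F m q b := rfl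

variable (k F) in
/-- `place` as an algebra homomorphism, which it is only for distinct slots. -/
noncomputable def placeAlgHom (h : p ≠ q) : F ⊗[k] F →ₐ[k] TPow k F m :=
  Algebra.TensorProduct.lift (singleAlgHom (A := fun _ => F) p) (singleAlgHom (A := fun _ => F) q)
    (commute_ins h)

lemma coe_placeAlgHom (h : p ≠ q) : ⇑(placeAlgHom k F h) = place k F m p q := by
  have h' : (placeAlgHom k F h).toLinearMap = place k F m p q := TensorProduct.ext' fun _ _ => rfl
  exact congrArg DFunLike.coe h'

lemma place_comm (h : p ≠ q) (Y : F ⊗[k] F) :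
    place k F m p q (Algebra.TensorProduct.comm k F F Y) = place k F m q p Y := by
  induction Y using TensorProduct.induction_on with
  | zero => simp only [map_zero]
  | tmul a b => exact (commute_ins h b a).eq
  | add Y Y' hY hY' => simp only [hY, hY', map_add]

/-- The placement of `F ⊗ (F ⊗ F)` in three distinct slots, along which (A2) is transported to
`F^{⊗d}`. -/
noncomputable def placeTripleAlgHom (hpq : p ≠ q) (hpr : p ≠ r) (hqr : q ≠ r) :
    F ⊗[k] (F ⊗[k] F) →ₐ[k] TPow k F m :=
  Algebra.TensorProduct.lift (singleAlgHom (A := fun _ => F) p) (placeAlgHom k F hqr) fun a Y => by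
    induction Y using TensorProduct.induction_on with
    | zero => simp
    | tmul b c => exact (commute_ins hpq a b).mul_right (commute_ins hpr a c)
    | add Y Y' hY hY' => rw [map_add]; exact hY.add_right hY'

lemma placeTripleAlgHom_emb12 (hpq : p ≠ q) (hpr : p ≠ r) (hqr : q ≠ r) (Y : F ⊗[k] F) :
    placeTripleAlgHom hpq hpr hqr (emb12 k F Y) = place k F m p q Y := by
  induction Y using TensorProduct.induction_on with
  | zero => simp only [map_zero]
  | tmul a b =>
    change ins k F m p a * (ins k F m q b * singleAlgHom (A := fun _ => F) r 1) = _
    rw [map_one, mul_one, place_tmul]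
  | add Y Y' hY hY' => simp only [map_add, hY, hY']

lemma placeTripleAlgHom_emb23 (hpq : p ≠ q) (hpr : p ≠ r) (hqr : q ≠ r) (Y : F ⊗[k] F) :
    placeTripleAlgHom hpq hpr hqr (emb23 k F Y) = place k F m q r Y := by
  rw [emb23, placeTripleAlgHom, TensorProduct.mk_apply, Algebra.TensorProduct.lift_tmul,
    map_one, one_mul, coe_placeAlgHom]

lemma place_mul_place_of_emb {Y₁ Y₂ Y₃ Y₄ : F ⊗[k] F}
    (h : emb12 k F Y₁ * emb23 k F Y₂ = emb12 k F Y₃ * emb23 k F Y₄)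
    (hpq : p ≠ q) (hpr : p ≠ r) (hqr : q ≠ r) :
    place k F m p q Y₁ * place k F m q r Y₂ = place k F m p q Y₃ * place k F m q r Y₄ := by
  simpa only [map_mul, placeTripleAlgHom_emb12, placeTripleAlgHom_emb23] using
    congrArg (placeTripleAlgHom hpq hpr hqr) h

/-- The pure tensor of `t` with its entries in the slots `p` and `q` replaced by `1`: what remains
of `tprod k t` after splitting off these two slots. -/
noncomputable def tprodAway (p q : Fin (m + 2)) (t : Fin (m + 2) → F) : TPow k F m :=
  tprod k (Function.update (Function.update t p 1) q 1)

lemma place_mul_tprodAway (h : p ≠ q) (t : Fin (m + 2) → F) :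
    place k F m p q (t p ⊗ₜ t q) * tprodAway p q t = tprod k t := by
  rw [place_tmul, tprodAway]
  change PiTensorProduct.tprod k _ * PiTensorProduct.tprod k _ * PiTensorProduct.tprod k _ = _
  rw [tprod_mul_tprod, tprod_mul_tprod]
  congr 1
  ext l
  rcases eq_or_ne l p with rfl | hp
  · simp [h]
  · rcases eq_or_ne l q with rfl | hq <;> simp [*]

lemma commute_place_tprodAway (h : p ≠ q) (t : Fin (m + 2) → F) (Y : F ⊗[k] F) :
    Commute (place k F m p q Y) (tprodAway p q t) := by
  induction Y using TensorProduct.induction_on with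
  | zero => simp
  | tmul a b =>
    rw [place_tmul]
    refine .mul_left ?_ ?_ <;> refine Commute.tprod (Pi.commute_iff.2 fun l => ?_)
    · rcases eq_or_ne l p with rfl | hp <;> simp [*]
    · rcases eq_or_ne l q with rfl | hq <;> simp [*]
  | add Y Y' hY hY' => rw [map_add]; exact hY.add_left hY'

lemma commute_place (h : p ≠ q) {Y : F ⊗[k] F} (hY : ∀ Z, Y * Z = Z * Y) (t : TPow k F m) :
    Commute (place k F m p q Y) t := by
  induction t using PiTensorProduct.induction_on with
  | smul_tprod c t =>
    rw [← place_mul_tprodAway h]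
    refine .smul_right (.mul_right ?_ (commute_place_tprodAway h t Y)) c
    rw [commute_iff_eq, ← coe_placeAlgHom h, ← map_mul, ← map_mul, hY]
  | add s t hs ht => exact hs.add_right ht

end Place

section Perm

variable (k F) in
/-- The action of a permutation on `F^{⊗d}` by moving slot `p` to slot `e p`. -/
noncomputable def permTPow (e : Perm (Fin (m + 2))) : TPow k F m →ₐ[k] TPow k F m :=
  AlgHom.ofLinearMap (reindex k (fun _ => F) e).toLinearMap (reindex_tprod e 1) fun s t => by
    induction s using PiTensorProduct.induction_on with
    | add s s' hs hs' => simp only [add_mul, map_add, hs, hs']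
    | smul_tprod c s =>
      induction t using PiTensorProduct.induction_on with
      | add t t' ht ht' => simp only [mul_add, map_add, ht, ht']
      | smul_tprod c' t =>
        simp only [map_smul, mul_smul_comm, smul_mul_assoc, tprod_mul_tprod, LinearEquiv.coe_coe,
          reindex_tprod, Pi.mul_def]

lemma permTPow_tprod (e : Perm (Fin (m + 2))) (t : Fin (m + 2) → F) :
    permTPow k F e (tprod k t) = tprod k (t ∘ e.symm) :=
  reindex_tprod e t

lemma permTPow_ins (e : Perm (Fin (m + 2))) (p : Fin (m + 2)) (a : F) :
    permTPow k F e (ins k F m p a) = ins k F m (e p) a :=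
  (permTPow_tprod e _).trans <| congrArg _ <| Function.update_comp_equiv _ e.symm _ _

lemma permTPow_one : permTPow k F (1 : Perm (Fin (m + 2))) = AlgHom.id k _ :=
  PiTensorProduct.algHom_ext fun p => AlgHom.ext (permTPow_ins 1 p)

lemma permTPow_mul (e e' : Perm (Fin (m + 2))) :
    permTPow k F (e * e') = (permTPow k F e).comp (permTPow k F e') :=
  PiTensorProduct.algHom_ext fun p => AlgHom.ext fun a => by
    change permTPow k F (e * e') (ins k F m p a) = permTPow k F e (permTPow k F e' (ins k F m p a))
    rw [permTPow_ins, permTPow_ins, permTPow_ins, Perm.mul_apply]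

lemma permTPow_place (e : Perm (Fin (m + 2))) (p q : Fin (m + 2)) (Y : F ⊗[k] F) :
    permTPow k F e (place k F m p q Y) = place k F m (e p) (e q) Y := by
  induction Y using TensorProduct.induction_on with
  | zero => simp only [map_zero]
  | tmul a b => rw [place_tmul, place_tmul, map_mul, permTPow_ins, permTPow_ins]
  | add Y Y' hY hY' => simp only [map_add, hY, hY']

lemma tprodAway_comp_swap (p q : Fin (m + 2)) (t : Fin (m + 2) → F) :
    tprodAway (k := k) p q (t ∘ swap p q) = tprodAway p q t := by
  rw [tprodAway, tprodAway]
  congr 1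
  ext l
  rcases eq_or_ne l q with rfl | hq
  · simp
  · rcases eq_or_ne l p with rfl | hp <;> simp [swap_apply_of_ne_of_ne, *]

lemma place_mul_permTPow {p q : Fin (m + 2)} (h : p ≠ q) {Δ : F ⊗[k] F}
    (hΔ : IsWeakFrobenius k F Δ) (hc : ∀ Z, Δ * Z = Z * Δ) (t : TPow k F m) :
    place k F m p q Δ * permTPow k F (swap p q) t = place k F m p q Δ * t := by
  induction t using PiTensorProduct.induction_on with
  | smul_tprod c t =>
    rw [map_smul, mul_smul_comm, mul_smul_comm, permTPow_tprod, symm_swap,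
      ← place_mul_tprodAway h, tprodAway_comp_swap, ← place_mul_tprodAway h t, ← mul_assoc,
      ← mul_assoc, ← coe_placeAlgHom h, ← map_mul, ← map_mul, Function.comp_apply,
      Function.comp_apply, swap_apply_left, swap_apply_right, ← hΔ, hc]
  | add s t hs ht => simp only [map_add, mul_add, hs, ht]

end Perm

section PolynomialTensorPower

/-- Permutations act on `B^{⊗d}` by moving tensor slots and variables simultaneously. -/
noncomputable instance mulSemiringActionBD :
    MulSemiringAction (Perm (Fin (m + 2))) (BD k F m) where
  smul e b := Algebra.TensorProduct.map (permTPow k F e) (rename e) b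
  one_smul b := by
    change Algebra.TensorProduct.map (permTPow k F 1) (rename id) b = b
    rw [permTPow_one, rename_id, Algebra.TensorProduct.map_id, AlgHom.id_apply]
  mul_smul e e' b := by
    change Algebra.TensorProduct.map (permTPow k F (e * e')) (rename (e ∘ e')) b = _
    rw [permTPow_mul, ← rename_comp_rename, Algebra.TensorProduct.map_comp]
    rfl
  smul_zero _ := map_zero _
  smul_add _ := map_add _
  smul_one _ := map_one _
  smul_mul _ := map_mul _

lemma perm_smul_tmul (e : Perm (Fin (m + 2))) (t : TPow k F m) (f : MvPolynomial (Fin (m + 2)) k) :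
    e • (t ⊗ₜ f : BD k F m) = permTPow k F e t ⊗ₜ rename e f := rfl

lemma sigmaB_apply (i : Fin (m + 1)) (b : BD k F m) :
    sigmaB k F m i b = swap i.castSucc i.succ • b := rfl

lemma tmul_one_mem_center {t : TPow k F m} (ht : t ∈ Subring.center (TPow k F m)) :
    (t ⊗ₜ 1 : BD k F m) ∈ Subring.center (BD k F m) := by
  rw [Subring.mem_center_iff] at ht ⊢
  intro b
  induction b using TensorProduct.induction_on with
  | zero => simp
  | tmul s f => simp [ht]
  | add b b' hb hb' => rw [mul_add, add_mul, hb, hb']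

lemma xv_mem_center (p : Fin (m + 2)) : xv k F m p ∈ Subring.center (BD k F m) := by
  rw [Subring.mem_center_iff]
  intro b
  induction b using TensorProduct.induction_on with
  | zero => simp
  | tmul s f => simp [xv, mul_comm]
  | add b b' hb hb' => rw [mul_add, add_mul, hb, hb']

lemma isSMulRegular_xv_sub_xv {p q : Fin (m + 2)} (h : p ≠ q) :
    IsSMulRegular (BD k F m) (xv k F m p - xv k F m q) := by
  have hX : (X p - X q : MvPolynomial (Fin (m + 2)) k) ≠ 0 :=
    sub_ne_zero.2 fun hX => h (X_injective hX)
  have hinj := Module.Flat.lTensor_preserves_injective_linearMap (M := TPow k F m)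
    (LinearMap.mulLeft k (X p - X q)) (mul_right_injective₀ hX)
  have hmul : LinearMap.lTensor (TPow k F m) (LinearMap.mulLeft k (X p - X q)) =
      LinearMap.mulLeft k (xv k F m p - xv k F m q) :=
    TensorProduct.ext' fun t f => by simp [xv, sub_mul, TensorProduct.tmul_sub]
  rwa [hmul] at hinj

variable (k F m) in
/-- The centre of `B^{⊗d}`, as a separate type because instance search on the coerced
`Subring.center` is prohibitively slow. -/
def CenterBD : Type _ := Subring.center (BD k F m)

namespace CenterBD

noncomputable instance : CommRing (CenterBD k F m) :=
  inferInstanceAs (CommRing (Subring.center (BD k F m)))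

noncomputable instance : Algebra (CenterBD k F m) (BD k F m) :=
  inferInstanceAs (Algebra (Subring.center (BD k F m)) (BD k F m))

noncomputable instance : MulSemiringAction (Perm (Fin (m + 2))) (CenterBD k F m) :=
  inferInstanceAs (MulSemiringAction (Perm (Fin (m + 2))) (Subring.center (BD k F m)))

instance : SMulDistribClass (Perm (Fin (m + 2))) (CenterBD k F m) (BD k F m) :=
  inferInstanceAs (SMulDistribClass (Perm (Fin (m + 2))) (Subring.center (BD k F m)) (BD k F m))

variable (k F m) in
/-- The inclusion of the centre in `B^{⊗d}`. -/
noncomputable def val : CenterBD k F m →+* BD k F m := (Subring.center (BD k F m)).subtype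

@[ext]
lemma ext {y z : CenterBD k F m} (h : val k F m y = val k F m z) : y = z := Subtype.ext h

lemma smul_eq (z : CenterBD k F m) (b : BD k F m) : z • b = val k F m z * b := rfl

lemma val_smul (e : Perm (Fin (m + 2))) (z : CenterBD k F m) :
    val k F m (e • z) = e • val k F m z := rfl

/-- The variable `x_p` as a central element. -/
noncomputable def x (p : Fin (m + 2)) : CenterBD k F m := ⟨xv k F m p, xv_mem_center p⟩

lemma val_x (p : Fin (m + 2)) : val k F m (x p) = xv k F m p := rfl

/-- The placement of central elements of `F ⊗ F` in two distinct slots. -/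
noncomputable def placeRingHom {p q : Fin (m + 2)} (h : p ≠ q) :
    Subring.center (F ⊗[k] F) →+* CenterBD k F m :=
  ((Algebra.TensorProduct.includeLeftRingHom.comp
    (placeAlgHom k F h : F ⊗[k] F →+* TPow k F m)).comp
    (Subring.center (F ⊗[k] F)).subtype).codRestrict (Subring.center (BD k F m)) fun Y =>
      tmul_one_mem_center <| Subring.mem_center_iff.2 fun t => by
        rw [RingHom.coe_coe, coe_placeAlgHom]
        exact (commute_place h (fun z => (Subring.mem_center_iff.1 Y.2 z).symm) t).eq.symm

/-- The placement of central elements of `F ⊗ F` in the slots `p, q`, with junk value `0` for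
`p = q` so that it is defined for all pairs. It then still commutes with permutations. -/
noncomputable def place (p q : Fin (m + 2)) : Subring.center (F ⊗[k] F) →ₙ+* CenterBD k F m :=
  if h : p ≠ q then (placeRingHom h).toNonUnitalRingHom else 0

variable {p q : Fin (m + 2)}

lemma val_place (h : p ≠ q) (Y : Subring.center (F ⊗[k] F)) :
    val k F m (place p q Y) = _root_.place k F m p q Y ⊗ₜ 1 := by
  rw [place, dif_pos h, ← coe_placeAlgHom h]
  rfl

lemma place_self (Y : Subring.center (F ⊗[k] F)) : place (m := m) p p Y = 0 := by
  rw [place, dif_neg (not_not.2 rfl), NonUnitalRingHom.zero_apply]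

lemma perm_smul_x (e : Perm (Fin (m + 2))) (p : Fin (m + 2)) :
    e • x (k := k) (F := F) p = x (e p) := by
  ext
  rw [val_smul, val_x, val_x, xv, perm_smul_tmul, map_one, rename_X, xv]

lemma perm_smul_place (e : Perm (Fin (m + 2))) (p q : Fin (m + 2))
    (Y : Subring.center (F ⊗[k] F)) : e • place p q Y = place (e p) (e q) Y := by
  rcases eq_or_ne p q with rfl | h
  · rw [place_self, place_self, smul_zero]
  ext
  rw [val_smul, val_place h, val_place (e.injective.ne h), perm_smul_tmul, permTPow_place, map_one]

lemma place_comm {Y Y' : Subring.center (F ⊗[k] F)}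
    (hY : Algebra.TensorProduct.comm k F F Y = Y') (p q : Fin (m + 2)) :
    place p q Y' = place q p Y := by
  rcases eq_or_ne p q with rfl | h
  · rw [place_self, place_self]
  ext
  rw [val_place h, val_place h.symm, ← hY, _root_.place_comm h]

lemma place_mul_swap_smul_place {Δ : Subring.center (F ⊗[k] F)} (hΔ : IsWeakFrobenius k F Δ)
    (p q u v : Fin (m + 2)) (Y : Subring.center (F ⊗[k] F)) :
    place p q Δ * swap p q • place u v Y = place p q Δ * place u v Y := by
  rcases eq_or_ne p q with rfl | h
  · rw [place_self, zero_mul, zero_mul]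
  rcases eq_or_ne u v with rfl | h'
  · rw [place_self, smul_zero]
  ext
  rw [map_mul, map_mul, val_smul, val_place h, val_place h', perm_smul_tmul, map_one,
    Algebra.TensorProduct.tmul_mul_tmul, Algebra.TensorProduct.tmul_mul_tmul,
    place_mul_permTPow h hΔ fun z => (Subring.mem_center_iff.1 Δ.2 z).symm]

lemma place_mul_place_of_emb {Y₁ Y₂ Y₃ Y₄ : Subring.center (F ⊗[k] F)}
    (h : emb12 k F Y₁ * emb23 k F Y₂ = emb12 k F Y₃ * emb23 k F Y₄) {p q r : Fin (m + 2)}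
    (hpq : p ≠ q) (hpr : p ≠ r) (hqr : q ≠ r) :
    place p q Y₁ * place q r Y₂ = place p q Y₃ * place q r Y₄ := by
  ext
  simp only [map_mul, val_place hpq, val_place hqr, Algebra.TensorProduct.tmul_mul_tmul,
    _root_.place_mul_place_of_emb h hpq hpr hqr]

lemma isSMulRegular_x_sub_x (h : p ≠ q) :
    IsSMulRegular (BD k F m) (x p - x q : CenterBD k F m) :=
  isSMulRegular_xv_sub_xv h

lemma place_sub_comm {Δ : Fin 2 → Fin 2 → Subring.center (F ⊗[k] F)}
    (hsym : ∀ i j, IsSymmEl k F (Δ i j : F ⊗[k] F)) (p q : Fin (m + 2)) :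
    place p q (Δ 1 0 - Δ 0 1) = place q p (Δ 1 0 - Δ 0 1) := by
  rw [map_sub, map_sub, place_comm (hsym 1 0), place_comm (hsym 0 1)]

section Datum

variable (Δ : Fin 2 → Fin 2 → Subring.center (F ⊗[k] F)) (α : Subring.center (F ⊗[k] F))

/-- The element `β` placed in the slots `p, q`. -/
noncomputable def β (p q : Fin (m + 2)) : CenterBD k F m :=
  biaffine (fun i j => place p q (Δ i j)) (x p) (x q)

variable {Δ}

lemma β_mul_swap_smul_place (hwf : ∀ i j, IsWeakFrobenius k F (Δ i j : F ⊗[k] F))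
    (p q u v : Fin (m + 2)) (Y : Subring.center (F ⊗[k] F)) :
    β Δ p q * swap p q • place u v Y = β Δ p q * place u v Y := by
  have h (i j : Fin 2) := place_mul_swap_smul_place (hwf i j) p q u v Y
  unfold β biaffine
  linear_combination h 0 0 + x p * h 1 0 + x q * h 0 1 + x p * x q * h 1 1

lemma β_mul_β (hwf : ∀ i j, IsWeakFrobenius k F (Δ i j : F ⊗[k] F))
    (hsym : ∀ i j, IsSymmEl k F (Δ i j : F ⊗[k] F))
    (hA2 : emb12 k F (Δ 0 0) * emb23 k F (Δ 1 1) = emb12 k F (Δ 0 1) * emb23 k F (Δ 1 0))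
    {p q r : Fin (m + 2)} (hpq : p ≠ q) (hqr : q ≠ r) (hpr : p ≠ r) :
    (x p - x r) * (β Δ p q * β Δ q r) = (x q - x r) * (β Δ p q * β Δ p r)
      + (x p - x q) * (β Δ p r * β Δ q r)
      - place p q (Δ 1 0 - Δ 0 1) * (x p - x q) * (x q - x r) * β Δ p r := by
  have hdf (i j i' j' : Fin 2) : place p q (Δ i j) * place p r (Δ i' j') =
      place p q (Δ i j) * place q r (Δ i' j') := by
    rw [← place_mul_swap_smul_place (hwf i j), perm_smul_place, swap_apply_left,
      swap_apply_of_ne_of_ne hpr.symm hqr.symm]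
  have hfe (i j i' j' : Fin 2) : place p r (Δ i j) * place q r (Δ i' j') =
      place p q (Δ i j) * place q r (Δ i' j') := by
    rw [mul_comm, ← place_mul_swap_smul_place (hwf i' j'), perm_smul_place, swap_apply_right,
      swap_apply_of_ne_of_ne hpq hpr, mul_comm]
  have hfd (i j i' j' : Fin 2) : place p r (Δ i j) * place p q (Δ i' j') =
      place p r (Δ i j) * place q r (Δ i' j') := by
    rw [← place_mul_swap_smul_place (hwf i j), perm_smul_place, swap_apply_left,
      swap_apply_of_ne_of_ne hpq.symm hqr, place_comm (hsym i' j')]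
  have hde (i j i' j' : Fin 2) : place p q (Δ i j) * place q r (Δ i' j') =
      place p q (Δ i' j') * place q r (Δ i j) := by
    rw [← hdf, mul_comm, hfd, hfe]
  rw [map_sub]
  exact biaffine_mul_biaffine hdf hfe hde (place_mul_place_of_emb hA2 hpq hpr hqr) _ _ _

/-- The datum of `β`, `S`, `R` and `ᾱ` built from `Δ^{ij}` and `α`, with `ᾱ = σ(α) + S` and with
`R` defined as `α ᾱ`. -/
noncomputable def demazureDatum (hwf : ∀ i j, IsWeakFrobenius k F (Δ i j : F ⊗[k] F))
    (hsym : ∀ i j, IsSymmEl k F (Δ i j : F ⊗[k] F))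
    (hA2 : emb12 k F (Δ 0 0) * emb23 k F (Δ 1 1) = emb12 k F (Δ 0 1) * emb23 k F (Δ 1 0)) :
    DemazureDatum (Fin (m + 2)) (CenterBD k F m) (BD k F m) where
  x := x
  β := β Δ
  S p q := place p q (Δ 1 0 - Δ 0 1)
  R p q := place p q α * (place q p α + place p q (Δ 1 0 - Δ 0 1))
  α p q := place q p α + place p q (Δ 1 0 - Δ 0 1)
  smul_x := perm_smul_x
  smul_β e p q := by simp only [β, biaffine, smul_add, smul_mul', perm_smul_x, perm_smul_place]
  smul_S e p q := perm_smul_place e p q _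
  smul_R e p q := by simp only [smul_add, smul_mul', perm_smul_place]
  smul_α e p q := by simp only [smul_add, perm_smul_place]
  S_comm := place_sub_comm hsym
  R_comm p q := by
    have h (i j : Fin 2) := place_mul_swap_smul_place (hwf i j) p q p q α
    simp only [perm_smul_place, swap_apply_left, swap_apply_right] at h
    rw [place_sub_comm hsym q, map_sub]
    linear_combination h 0 1 - h 1 0
  β_mul_S p q u v := β_mul_swap_smul_place hwf p q u v _
  β_mul_R p q u v := by
    have h := β_mul_swap_smul_place hwf p q
    rw [smul_mul', smul_add]
    linear_combination (swap p q • place v u α + swap p q • place u v (Δ 1 0 - Δ 0 1)) * h u v α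
      + place u v α * (h v u α + h u v (Δ 1 0 - Δ 0 1))
  β_mul_α p q u v := by
    rw [smul_add, mul_add, mul_add, β_mul_swap_smul_place hwf, β_mul_swap_smul_place hwf]
  β_sub p q := by
    simp only [β, biaffine, map_sub]
    rw [place_comm (hsym 0 0), place_comm (hsym 1 0), place_comm (hsym 0 1), place_comm (hsym 1 1)]
    ring
  α_mul p q := by
    rw [place_sub_comm hsym q]
    ring
  β_mul_β := β_mul_β hwf hsym hA2
  isSMulRegular := isSMulRegular_x_sub_x

end Datum

end CenterBD

end PolynomialTensorPower

section TensorSpace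

lemma mulBy_eq_op_smul {n : ℕ} (b : BD k F m) (v : TSp k F m n) : mulBy k F m n b v = op b • v :=
  Finsupp.ext fun _ => rfl

namespace CenterBD

lemma val_mul_comm (z : CenterBD k F m) (b : BD k F m) : val k F m z * b = b * val k F m z :=
  (Subring.mem_center_iff.1 z.2 b).symm

variable (Δ : Fin 2 → Fin 2 → Subring.center (F ⊗[k] F)) (α : Subring.center (F ⊗[k] F))
  (i : Fin (m + 1))

lemma val_β : val k F m (β Δ i.castSucc i.succ) = betaI k F m (fun i j => Δ i j) i := by
  simp only [β, biaffine, betaI, map_add, map_mul, val_place i.castSucc_lt_succ.ne, val_x, xv,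
    Algebra.TensorProduct.tmul_mul_tmul, mul_one, one_mul]

variable {Δ} (hwf : ∀ i j, IsWeakFrobenius k F (Δ i j : F ⊗[k] F))
  (hsym : ∀ i j, IsSymmEl k F (Δ i j : F ⊗[k] F))
  (hA2 : emb12 k F (Δ 0 0) * emb23 k F (Δ 1 1) = emb12 k F (Δ 0 1) * emb23 k F (Δ 1 0))

lemma val_demazureDatum_S : val k F m ((demazureDatum α hwf hsym hA2).S i.castSucc i.succ) =
    SI k F m (fun i j => Δ i j) i :=
  val_place i.castSucc_lt_succ.ne _

lemma val_demazureDatum_α : val k F m ((demazureDatum α hwf hsym hA2).α i.castSucc i.succ) =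
    abarI k F m (fun i j => Δ i j) α i := by
  have h := i.castSucc_lt_succ.ne
  change val k F m (place _ _ α + place _ _ (Δ 1 0 - Δ 0 1)) = _
  rw [map_add, val_place h.symm, val_place h, abarI, map_add, _root_.place_comm h,
    TensorProduct.add_tmul]
  rfl

lemma val_demazureDatum_R : val k F m ((demazureDatum α hwf hsym hA2).R i.castSucc i.succ) =
    RI k F m (α * (Algebra.TensorProduct.comm k F F α + (Δ 1 0 - Δ 0 1))) i := by
  have h := i.castSucc_lt_succ.ne
  change val k F m (place _ _ α * (demazureDatum α hwf hsym hA2).α _ _) = _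
  rw [map_mul, val_demazureDatum_α, val_place h, abarI, RI,
    Algebra.TensorProduct.tmul_mul_tmul, mul_one, ← coe_placeAlgHom h, map_mul]

variable {α} {i} {Rv : F ⊗[k] F} {ρf : Fin (m + 1) → BD k F m →ₗ[k] BD k F m}

lemma isDemazure_of_mul_eq
    (hρ : ∀ a, (xv k F m i.castSucc - xv k F m i.succ) * ρf i a =
      betaI k F m (fun i j => Δ i j) i * a - sigmaB k F m i a * betaI k F m (fun i j => Δ i j) i) :
    (demazureDatum α hwf hsym hA2).IsDemazure i.castSucc i.succ (ρf i).toAddMonoidHom := fun a => by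
  rw [smul_eq, smul_eq, mul_sub, val_mul_comm _ (_ • a), ← sigmaB_apply]
  change _ = val k F m (β Δ _ _) * a - _ * val k F m (β Δ _ _)
  rw [val_β]
  exact hρ a

lemma hop_eq_heckeOp {n : ℕ}
    (hC1 : α * (Algebra.TensorProduct.comm k F F α + (Δ 1 0 - Δ 0 1)) = Rv) (v : TSp k F m n) :
    Hop k F m n (fun i j => Δ i j) α Rv ρf i v =
      (demazureDatum α hwf hsym hA2).heckeOp i.castSucc i.succ (ρf i).toAddMonoidHom v := by
  rw [DemazureDatum.heckeOp, Finsupp.liftAddHom_apply, Hop]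
  refine Finsupp.sum_congr fun f _ => ?_
  change _ =
    op (sigmaB k F m i (v f)) • (demazureDatum α hwf hsym hA2).heckeBasis _ _ f + .single f (ρf i _)
  rw [DemazureDatum.op_smul_heckeBasis]
  split_ifs
  · rfl
  · rw [smul_eq, val_demazureDatum_α]
  · rw [smul_eq, smul_eq, val_demazureDatum_R, hC1, val_demazureDatum_S, Finsupp.single_add]
    exact (add_assoc _ _ _).symm.trans (add_right_comm _ _ _)

lemma op_val_smul {n : ℕ} (z : CenterBD k F m) (v : TSp k F m n) : op (val k F m z) • v = z • v :=
  Finsupp.ext fun f => (val_mul_comm z (v f)).symm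

end CenterBD

end TensorSpace

end TensorPower

theorem stmt15_general [Field k] [Ring F] [Algebra k F] (n : ℕ)
    (Δf : Fin 2 → Fin 2 → F ⊗[k] F)
    (hwf : ∀ i j, IsWeakFrobenius k F (Δf i j))
    (hsym : ∀ i j, IsSymmEl k F (Δf i j))
    (hA2 : emb12 k F (Δf 0 0) * emb23 k F (Δf 1 1) =
      emb12 k F (Δf 0 1) * emb23 k F (Δf 1 0))
    (Rv αv : F ⊗[k] F)
    (hC1 : αv * ((Algebra.TensorProduct.comm k F F) αv + (Δf 1 0 - Δf 0 1)) = Rv)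
    (hαc : ∀ z, αv * z = z * αv)
    (hΔc : ∀ i j z, Δf i j * z = z * Δf i j)
    (ρf : Fin (m + 1) → BD k F m →ₗ[k] BD k F m)
    (hρ : ∀ (i : Fin (m + 1)) (a : BD k F m),
      (xv k F m i.castSucc - xv k F m i.succ) * ρf i a =
        betaI k F m Δf i * a - sigmaB k F m i a * betaI k F m Δf i) :
    (∀ i j : Fin (m + 1), ((i : ℕ) + 2 ≤ (j : ℕ) ∨ (j : ℕ) + 2 ≤ (i : ℕ)) →
      ∀ v : TSp k F m n,
        Hop k F m n Δf αv Rv ρf i (Hop k F m n Δf αv Rv ρf j v) =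
          Hop k F m n Δf αv Rv ρf j (Hop k F m n Δf αv Rv ρf i v)) ∧
    (∀ i j : Fin (m + 1), (i : ℕ) + 1 = (j : ℕ) →
      ∀ v : TSp k F m n,
        Hop k F m n Δf αv Rv ρf i (Hop k F m n Δf αv Rv ρf j (Hop k F m n Δf αv Rv ρf i v)) =
          Hop k F m n Δf αv Rv ρf j (Hop k F m n Δf αv Rv ρf i (Hop k F m n Δf αv Rv ρf j v))) ∧
    (∀ (i : Fin (m + 1)) (v : TSp k F m n),
      Hop k F m n Δf αv Rv ρf i (Hop k F m n Δf αv Rv ρf i v) =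
        Hop k F m n Δf αv Rv ρf i (mulBy k F m n (SI k F m Δf i) v)
          + mulBy k F m n (RI k F m Rv i) v) ∧
    (∀ (i : Fin (m + 1)) (b : BD k F m) (v : TSp k F m n),
      mulBy k F m n b (Hop k F m n Δf αv Rv ρf i v) =
        Hop k F m n Δf αv Rv ρf i (mulBy k F m n (sigmaB k F m i b) v)
          + mulBy k F m n (ρf i b) v) := by
  obtain ⟨Δ, rfl⟩ : ∃ Δ : Fin 2 → Fin 2 → Subring.center (F ⊗[k] F), Δf = fun i j => ↑(Δ i j) :=
    ⟨fun i j => ⟨Δf i j, Subring.mem_center_iff.2 fun z => (hΔc i j z).symm⟩, rfl⟩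
  lift αv to Subring.center (F ⊗[k] F) using Subring.mem_center_iff.2 fun z => (hαc z).symm
  let D := CenterBD.demazureDatum (m := m) αv hwf hsym hA2
  have hD (i : Fin (m + 1)) : D.IsDemazure i.castSucc i.succ (ρf i).toAddMonoidHom :=
    CenterBD.isDemazure_of_mul_eq hwf hsym hA2 (hρ i)
  have hne (i : Fin (m + 1)) : i.castSucc ≠ i.succ := i.castSucc_lt_succ.ne
  have hT (i : Fin (m + 1)) := DemazureDatum.isHeckeOperator_heckeOp (ι := Fin n) (hne i) (hD i)
  simp only [CenterBD.hop_eq_heckeOp hwf hsym hA2 hC1, mulBy_eq_op_smul]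
  refine ⟨fun i j h v => ?_, fun i j h v => ?_, fun i v => ?_, fun i b v => ?_⟩
  · apply DemazureDatum.heckeOp_comm (hD i) (hD j) (hne i) (hne j) <;>
    · simp only [ne_eq, Fin.ext_iff, Fin.val_castSucc, Fin.val_succ]
      lia
  · obtain hij : j.castSucc = i.succ := Fin.ext h.symm
    have hj := hD j
    rw [hij] at hj ⊢
    exact DemazureDatum.heckeOp_braid (hD i) hj (hne i) (hij ▸ hne j)
      (by simp only [ne_eq, Fin.ext_iff, Fin.val_castSucc, Fin.val_succ]; lia) v
  · rw [← hC1, ← CenterBD.val_demazureDatum_S αv i hwf hsym hA2,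
      ← CenterBD.val_demazureDatum_R αv i hwf hsym hA2, CenterBD.op_val_smul,
      CenterBD.op_val_smul, (hT i).apply_apply_eq_apply_S_smul (hne i)]
  · exact (hT i).op_smul_apply (hne i) b v

/-- The tensor space operators define a right `B ≀ H(d)`-module structure on
`V_n^{⊗d}`: the braid, quadratic and wreath relations hold. -/
theorem stmt15 [Field k] [Ring F] [Algebra k F] [FiniteDimensional k F] (n : ℕ)
    (Δf : Fin 2 → Fin 2 → F ⊗[k] F)
    (hwf : ∀ i j, IsWeakFrobenius k F (Δf i j))
    (hsym : ∀ i j, IsSymmEl k F (Δf i j))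
    (hA2 : emb12 k F (Δf 0 0) * emb23 k F (Δf 1 1) =
      emb12 k F (Δf 0 1) * emb23 k F (Δf 1 0))
    (Rv : F ⊗[k] F) (hRc : ∀ z, Rv * z = z * Rv) (hRs : IsSymmEl k F Rv)
    -- (C1): `α·(σ(α)+S) = R`
    (αv : F ⊗[k] F)
    (hC1 : αv * ((Algebra.TensorProduct.comm k F F) αv + (Δf 1 0 - Δf 0 1)) = Rv)
    -- (C2): `α` and each `Δ^{ij}` are central in `F⊗F`
    (hαc : ∀ z, αv * z = z * αv)
    (hΔc : ∀ i j z, Δf i j * z = z * Δf i j)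
    (ρf : Fin (m + 1) → BD k F m →ₗ[k] BD k F m)
    (hρ : ∀ (i : Fin (m + 1)) (a : BD k F m),
      (xv k F m i.castSucc - xv k F m i.succ) * ρf i a =
        betaI k F m Δf i * a - sigmaB k F m i a * betaI k F m Δf i) :
    -- braid relations (distant and adjacent)
    (∀ i j : Fin (m + 1), ((i : ℕ) + 2 ≤ (j : ℕ) ∨ (j : ℕ) + 2 ≤ (i : ℕ)) →
      ∀ v : TSp k F m n,
        Hop k F m n Δf αv Rv ρf i (Hop k F m n Δf αv Rv ρf j v) =
          Hop k F m n Δf αv Rv ρf j (Hop k F m n Δf αv Rv ρf i v)) ∧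
    (∀ i j : Fin (m + 1), (i : ℕ) + 1 = (j : ℕ) →
      ∀ v : TSp k F m n,
        Hop k F m n Δf αv Rv ρf i (Hop k F m n Δf αv Rv ρf j (Hop k F m n Δf αv Rv ρf i v)) =
          Hop k F m n Δf αv Rv ρf j (Hop k F m n Δf αv Rv ρf i (Hop k F m n Δf αv Rv ρf j v))) ∧
    -- quadratic relation: `(v·H_k)·H_k = (v·S_k)·H_k + v·R_k`
    (∀ (i : Fin (m + 1)) (v : TSp k F m n),
      Hop k F m n Δf αv Rv ρf i (Hop k F m n Δf αv Rv ρf i v) =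
        Hop k F m n Δf αv Rv ρf i (mulBy k F m n (SI k F m Δf i) v)
          + mulBy k F m n (RI k F m Rv i) v) ∧
    -- wreath relation: `(v·H_k)·b = (v·σ_k(b))·H_k + v·ρ_k(b)`
    (∀ (i : Fin (m + 1)) (b : BD k F m) (v : TSp k F m n),
      mulBy k F m n b (Hop k F m n Δf αv Rv ρf i v) =
        Hop k F m n Δf αv Rv ρf i (mulBy k F m n (sigmaB k F m i b) v)
          + mulBy k F m n (ρf i b) v) :=
  stmt15_general k F m n Δf hwf hsym hA2 Rv αv hC1 hαc hΔc ρf hρ
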